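/- arXiv:2206.13775 — 2 statements merged into one kernel-verified Lean document; each statement's English description precedes it below -/
import Mathlib

section
/- Let $B_1^2$ be the open unit ball in $\mathbb{R}^2$. For every $u \in C_0^\infty(B_1^2)$ satisfying $\int_0^{2\pi} u(r\theta)\,d\theta = 0$ for all $r \ge 0$, one has $\frac{5}{4} \int_{B_1^2} \frac{|u(x)|^2}{|x|^2 (\log\frac{e}{|x|})^2}\,dx \le \int_{B_1^2} |\nabla u(x)|^2\,dx$. -/
open MeasureTheory Metric
open scoped ENNReal

noncomputable section

/-- The plane `ℝ²`. -/
abbrev E2 := EuclideanSpace ℝ (Fin 2)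

/-- The point `r (cos θ, sin θ)` of `ℝ²`. -/
def polarPt (r θ : ℝ) : E2 :=
  (EuclideanSpace.equiv (Fin 2) ℝ).symm ![r * Real.cos θ, r * Real.sin θ]

/-! In polar coordinates `|∇u|²` is the sum of the squares of the radial and the tangential
derivative.

* Along each ray, `(f² / log (T / r))' = 2 f f' / log (T / r) + f² / (r log (T / r)²)`, and
  completing the square gives `¼ f² / (r log (T / r)²) ≤ r f'² + ½ (f² / log (T / r))'`. Since `f`
  vanishes at the outer end, integration yields the critical Hardy inequality with constant `¼` and
  only the radial derivative on the right.
* On each circle `u` has no zeroth Fourier mode, so Wirtinger's inequality bounds `∫ |u|² / |x|²` by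
  the tangential part of the energy.

Since `log (e / |x|) ≥ 1` in the unit ball, `|u|² / |x|²` dominates the Hardy integrand, and the two
estimates add up to the constant `¼ + 1 = 5/4`. -/

open Set Filter Real
open scoped Topology

/-! ### Wirtinger's inequality -/

lemma norm_fourierCoeffOn_le_of_hasDerivAt {a b : ℝ} (hab : a < b) {f f' : ℝ → ℂ} {n : ℤ}
    (hn : n ≠ 0) (hf : ContinuousOn f (Icc a b)) (hff' : ∀ x ∈ Ioo a b, HasDerivAt f (f' x) x)
    (hf' : IntervalIntegrable f' volume a b) (hper : f a = f b) :
    ‖fourierCoeffOn hab f n‖ ≤ (b - a) / (2 * π) * ‖fourierCoeffOn hab f' n‖ := by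
  have hba : 0 < b - a := sub_pos.2 hab
  have hn_abs : 1 ≤ |(n : ℝ)| := by exact_mod_cast Int.one_le_abs hn
  have hcoeff := fourierCoeffOn_of_hasDerivAt_Ioo hab hn (by rwa [uIcc_of_le hab.le])
    (by rwa [min_eq_left hab.le, max_eq_right hab.le]) hf'
  calc ‖fourierCoeffOn hab f n‖
      = (b - a) / (2 * π * |(n : ℝ)|) * ‖fourierCoeffOn hab f' n‖ := by
        rw [hcoeff, hper, sub_self, mul_zero, zero_sub, ← Complex.ofReal_sub]
        simp only [norm_mul, norm_div, norm_neg, norm_one, Complex.norm_ofNat, Complex.norm_real,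
          Complex.norm_I, Complex.norm_intCast, norm_eq_abs, abs_of_pos pi_pos, abs_of_pos hba]
        ring
    _ ≤ (b - a) / (2 * π) * ‖fourierCoeffOn hab f' n‖ := by
        refine mul_le_mul_of_nonneg_right (div_le_div_of_nonneg_left hba.le two_pi_pos ?_)
          (norm_nonneg _)
        exact le_mul_of_one_le_right two_pi_pos.le hn_abs

lemma memLp_restrict_Ioc_of_continuousOn {E : Type*} [NormedAddCommGroup E] {a b : ℝ} {f : ℝ → E}
    (hf : ContinuousOn f (Icc a b)) (p : ℝ≥0∞) : MemLp f p (volume.restrict (Ioc a b)) := by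
  obtain ⟨C, hC⟩ := isCompact_Icc.exists_bound_of_continuousOn hf
  exact MemLp.of_bound ((hf.mono Ioc_subset_Icc_self).aestronglyMeasurable measurableSet_Ioc) C
    (ae_restrict_of_forall_mem measurableSet_Ioc fun x hx => hC x (Ioc_subset_Icc_self hx))

theorem wirtinger_inequality {a b : ℝ} (hab : a < b) {f f' : ℝ → ℂ}
    (hf : ContinuousOn f (Icc a b)) (hff' : ∀ x ∈ Ioo a b, HasDerivAt f (f' x) x)
    (hf' : MemLp f' 2 (volume.restrict (Ioc a b))) (hper : f a = f b)
    (hmean : ∫ x in a..b, f x = 0) :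
    ∫ x in a..b, ‖f x‖ ^ 2 ≤ ((b - a) / (2 * π)) ^ 2 * ∫ x in a..b, ‖f' x‖ ^ 2 := by
  have hba : 0 < b - a := sub_pos.2 hab
  have hf'_int : IntervalIntegrable f' volume a b :=
    (intervalIntegrable_iff_integrableOn_Ioc_of_le hab.le).2 (hf'.integrable one_le_two)
  have hzero : fourierCoeffOn hab f 0 = 0 := by
    simp [fourierCoeffOn_eq_integral, hmean]
  have hcoeff (n : ℤ) : ‖fourierCoeffOn hab f n‖ ^ 2 ≤
      ((b - a) / (2 * π)) ^ 2 * ‖fourierCoeffOn hab f' n‖ ^ 2 := by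
    rcases eq_or_ne n 0 with rfl | hn
    · rw [hzero, norm_zero, zero_pow two_ne_zero]
      positivity
    · rw [← mul_pow]
      gcongr
      exact norm_fourierCoeffOn_le_of_hasDerivAt hab hn hf hff' hf'_int hper
  have hparseval := hasSum_le hcoeff
    (hasSum_sq_fourierCoeffOn hab (memLp_restrict_Ioc_of_continuousOn hf 2))
    ((hasSum_sq_fourierCoeffOn hab hf').mul_left _)
  rw [smul_eq_mul, smul_eq_mul, mul_left_comm] at hparseval
  exact le_of_mul_le_mul_left hparseval (inv_pos.2 hba)

lemma ofReal_intervalIntegral_eq_setLIntegral_Ioo {a b : ℝ} (hab : a ≤ b) {f : ℝ → ℝ}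
    (hf : IntervalIntegrable f volume a b) (hf_nonneg : ∀ x ∈ Ioo a b, 0 ≤ f x) :
    ENNReal.ofReal (∫ x in a..b, f x) = ∫⁻ x in Ioo a b, ENNReal.ofReal (f x) := by
  rw [intervalIntegral.integral_of_le hab, integral_Ioc_eq_integral_Ioo]
  exact ofReal_integral_eq_lintegral_ofReal
    ((intervalIntegrable_iff_integrableOn_Ioo_of_le hab).1 hf)
    (ae_restrict_of_forall_mem measurableSet_Ioo hf_nonneg)

lemma integral_mono_of_lintegral_ofReal_le {α : Type*} [MeasurableSpace α] {μ : Measure α}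
    {f g : α → ℝ} (hf : 0 ≤ᵐ[μ] f) (hfm : AEStronglyMeasurable f μ) (hg : 0 ≤ᵐ[μ] g)
    (hgi : Integrable g μ)
    (hfg : ∫⁻ x, ENNReal.ofReal (f x) ∂μ ≤ ∫⁻ x, ENNReal.ofReal (g x) ∂μ) :
    ∫ x, f x ∂μ ≤ ∫ x, g x ∂μ := by
  rw [integral_eq_lintegral_of_nonneg_ae hf hfm,
    integral_eq_lintegral_of_nonneg_ae hg hgi.aestronglyMeasurable]
  exact ENNReal.toReal_mono hgi.lintegral_lt_top.ne hfg

theorem setLIntegral_sq_le_of_intervalIntegral_eq_zero {a b : ℝ} (hab : a < b) {f f' : ℝ → ℝ}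
    (hf : ContinuousOn f (Icc a b)) (hff' : ∀ x ∈ Ioo a b, HasDerivAt f (f' x) x)
    (hf' : ContinuousOn f' (Icc a b)) (hper : f a = f b) (hmean : ∫ x in a..b, f x = 0) :
    ∫⁻ x in Ioo a b, ENNReal.ofReal (f x ^ 2) ≤
      ENNReal.ofReal (((b - a) / (2 * π)) ^ 2) * ∫⁻ x in Ioo a b, ENNReal.ofReal (f' x ^ 2) := by
  have hwirtinger := wirtinger_inequality hab (Complex.continuous_ofReal.comp_continuousOn hf)
    (fun x hx => (hff' x hx).ofReal_comp)
    (memLp_restrict_Ioc_of_continuousOn (Complex.continuous_ofReal.comp_continuousOn hf') 2)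
    (congrArg Complex.ofReal hper)
    (by simp [intervalIntegral.integral_ofReal, hmean])
  simp only [Function.comp_apply, Complex.norm_real, norm_eq_abs, sq_abs] at hwirtinger
  have hint {g : ℝ → ℝ} (hg : ContinuousOn g (Icc a b)) :
      IntervalIntegrable (fun x => g x ^ 2) volume a b :=
    (hg.pow 2).intervalIntegrable_of_Icc hab.le
  rw [← ofReal_intervalIntegral_eq_setLIntegral_Ioo hab.le (hint hf) fun x _ => sq_nonneg _,
    ← ofReal_intervalIntegral_eq_setLIntegral_Ioo hab.le (hint hf') fun x _ => sq_nonneg _,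
    ← ENNReal.ofReal_mul (sq_nonneg _)]
  exact ENNReal.ofReal_le_ofReal hwirtinger

/-! ### The one-dimensional critical Hardy inequality -/

lemma quarter_sq_div_le {r l : ℝ} (hr : 0 < r) (hl : 0 < l) (y y' : ℝ) :
    1 / 4 * (y ^ 2 / (r * l ^ 2)) ≤
      r * y' ^ 2 + 1 / 2 * (2 * y * y' / l + y ^ 2 / (r * l ^ 2)) := by
  have hsquare : r * y' ^ 2 + 1 / 2 * (2 * y * y' / l + y ^ 2 / (r * l ^ 2)) -
      1 / 4 * (y ^ 2 / (r * l ^ 2)) = r * (y' + y / (2 * r * l)) ^ 2 := by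
    field_simp
    ring
  rw [← sub_nonneg, hsquare]
  positivity

lemma log_div_pos {r T : ℝ} (hr : 0 < r) (hrT : r < T) : 0 < log (T / r) :=
  log_pos ((one_lt_div hr).2 hrT)

lemma one_le_log_exp_one_mul_div {r R : ℝ} (hr : 0 < r) (hrR : r ≤ R) :
    1 ≤ log (exp 1 * R / r) := by
  rw [le_log_iff_exp_le (by have := hr.trans_le hrR; positivity), mul_div_assoc]
  exact le_mul_of_one_le_right (exp_pos 1).le ((one_le_div hr).2 hrR)

lemma div_sq_mul_log_sq_le {c r R : ℝ} (hc : 0 ≤ c) (hr : 0 ≤ r) (hrR : r ≤ R) :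
    c / (r ^ 2 * log (exp 1 * R / r) ^ 2) ≤ c / r ^ 2 := by
  rcases hr.eq_or_lt with rfl | hr
  · simp
  · exact div_le_div_of_nonneg_left hc (pow_pos hr 2) (le_mul_of_one_le_right (sq_nonneg r)
      (one_le_pow₀ (one_le_log_exp_one_mul_div hr hrR)))

lemma continuousOn_log_const_div {T : ℝ} (hT : T ≠ 0) :
    ContinuousOn (fun r => log (T / r)) {0}ᶜ :=
  (continuousOn_const.div continuousOn_id fun _ hr => hr).log fun _ hr => div_ne_zero hT hr

lemma hasDerivAt_sq_div_log {f : ℝ → ℝ} {f' r T : ℝ} (hf : HasDerivAt f f' r) (hr : 0 < r)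
    (hrT : r < T) :
    HasDerivAt (fun s => f s ^ 2 / log (T / s))
      (2 * f r * f' / log (T / r) + f r ^ 2 / (r * log (T / r) ^ 2)) r := by
  have hT : 0 < T := hr.trans hrT
  have hlog_ne : log (T / r) ≠ 0 := (log_div_pos hr hrT).ne'
  have hlog : HasDerivAt (fun s => log (T / s)) (-r⁻¹) r := by
    refine (((hasDerivAt_inv hr.ne').const_mul T).log
      (mul_pos hT (inv_pos.2 hr)).ne').congr_deriv ?_
    field_simp
  refine ((hf.fun_pow 2).fun_div hlog hlog_ne).congr_deriv ?_
  field_simp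
  ring

section Hardy

variable {a b T : ℝ} {f f' : ℝ → ℝ}

lemma continuousOn_sq_div_log (ha : 0 < a) (hbT : b < T) (hf : ContinuousOn f (Icc a b)) :
    ContinuousOn (fun r => f r ^ 2 / (r * log (T / r) ^ 2)) (Icc a b) := by
  intro r hr
  have hr_pos : 0 < r := ha.trans_le hr.1
  have hrT : r < T := hr.2.trans_lt hbT
  have hlog : ContinuousAt (fun s => log (T / s)) r :=
    (continuousOn_log_const_div (hr_pos.trans hrT).ne').continuousAt
      (isOpen_compl_singleton.mem_nhds hr_pos.ne')
  exact ((hf r hr).pow 2).div (continuousAt_id.mul (hlog.pow 2)).continuousWithinAt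
    (mul_pos hr_pos (pow_pos (log_div_pos hr_pos hrT) 2)).ne'

theorem intervalIntegral_hardy_le (ha : 0 < a) (hab : a ≤ b) (hbT : b < T)
    (hff' : ∀ r ∈ Icc a b, HasDerivAt f (f' r) r) (hf' : ContinuousOn f' (Icc a b)) :
    1 / 4 * ∫ r in a..b, f r ^ 2 / (r * log (T / r) ^ 2) ≤
      (∫ r in a..b, r * f' r ^ 2) + 1 / 2 * (f b ^ 2 / log (T / b)) := by
  have hpos : ∀ r ∈ Icc a b, 0 < r := fun r hr => ha.trans_le hr.1
  have hlog_pos : ∀ r ∈ Icc a b, 0 < log (T / r) := fun r hr =>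
    log_div_pos (hpos r hr) (hr.2.trans_lt hbT)
  have hf : ContinuousOn f (Icc a b) := fun r hr => (hff' r hr).continuousAt.continuousWithinAt
  have hlog : ContinuousOn (fun r => log (T / r)) (Icc a b) :=
    (continuousOn_log_const_div (ha.trans_le (hab.trans hbT.le)).ne').mono
      fun r hr => (hpos r hr).ne'
  have hweighted := continuousOn_sq_div_log ha hbT hf
  have henergy : IntervalIntegrable (fun r => r * f' r ^ 2) volume a b :=
    (continuousOn_id.mul (hf'.pow 2)).intervalIntegrable_of_Icc hab
  have hderiv : IntervalIntegrable
      (fun r => 2 * f r * f' r / log (T / r) + f r ^ 2 / (r * log (T / r) ^ 2)) volume a b :=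
    ((((continuousOn_const.mul hf).mul hf').div hlog fun r hr => (hlog_pos r hr).ne').add
      hweighted).intervalIntegrable_of_Icc hab
  calc 1 / 4 * ∫ r in a..b, f r ^ 2 / (r * log (T / r) ^ 2)
      = ∫ r in a..b, 1 / 4 * (f r ^ 2 / (r * log (T / r) ^ 2)) :=
        (intervalIntegral.integral_const_mul _ _).symm
    _ ≤ ∫ r in a..b, (r * f' r ^ 2 +
          1 / 2 * (2 * f r * f' r / log (T / r) + f r ^ 2 / (r * log (T / r) ^ 2))) :=
        intervalIntegral.integral_mono_on hab
          ((hweighted.intervalIntegrable_of_Icc hab).const_mul _)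
          (henergy.add (hderiv.const_mul _))
          fun r hr => quarter_sq_div_le (hpos r hr) (hlog_pos r hr) _ _
    _ = (∫ r in a..b, r * f' r ^ 2) +
          1 / 2 * (f b ^ 2 / log (T / b) - f a ^ 2 / log (T / a)) := by
        rw [intervalIntegral.integral_add henergy (hderiv.const_mul _),
          intervalIntegral.integral_const_mul,
          intervalIntegral.integral_eq_sub_of_hasDerivAt (fun r hr => ?_) hderiv]
        rw [uIcc_of_le hab] at hr
        exact hasDerivAt_sq_div_log (hff' r hr) (hpos r hr) (hr.2.trans_lt hbT)
    _ ≤ (∫ r in a..b, r * f' r ^ 2) + 1 / 2 * (f b ^ 2 / log (T / b)) := by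
        gcongr
        exact sub_le_self _ (div_nonneg (sq_nonneg _) (hlog_pos a (left_mem_Icc.2 hab)).le)

lemma setLIntegral_hardy_le_of_pos (ha : 0 < a) (hab : a ≤ b) (hbT : b < T)
    (hff' : ∀ r ∈ Icc a b, HasDerivAt f (f' r) r) (hf' : ContinuousOn f' (Icc a b))
    (hb : f b = 0) :
    ∫⁻ r in Ioo a b, ENNReal.ofReal (1 / 4 * (f r ^ 2 / (r * log (T / r) ^ 2))) ≤
      ∫⁻ r in Ioo a b, ENNReal.ofReal (r * f' r ^ 2) := by
  have hpos : ∀ r ∈ Ioo a b, 0 < r := fun r hr => ha.trans hr.1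
  have hweighted : IntervalIntegrable (fun r => 1 / 4 * (f r ^ 2 / (r * log (T / r) ^ 2)))
      volume a b :=
    (continuousOn_const.mul (continuousOn_sq_div_log ha hbT fun r hr =>
      (hff' r hr).continuousAt.continuousWithinAt)).intervalIntegrable_of_Icc hab
  have henergy : IntervalIntegrable (fun r => r * f' r ^ 2) volume a b :=
    (continuousOn_id.mul (hf'.pow 2)).intervalIntegrable_of_Icc hab
  rw [← ofReal_intervalIntegral_eq_setLIntegral_Ioo hab hweighted fun r hr => by
      have := hpos r hr; positivity,
    ← ofReal_intervalIntegral_eq_setLIntegral_Ioo hab henergy fun r hr => by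
      have := hpos r hr; positivity,
    intervalIntegral.integral_const_mul]
  refine ENNReal.ofReal_le_ofReal ?_
  simpa [hb] using intervalIntegral_hardy_le ha hab hbT hff' hf'

theorem setLIntegral_hardy_le (hb : 0 < b) (hbT : b < T)
    (hff' : ∀ r ∈ Ioc 0 b, HasDerivAt f (f' r) r) (hf' : ContinuousOn f' (Ioc 0 b))
    (hfb : f b = 0) :
    ∫⁻ r in Ioo 0 b, ENNReal.ofReal (1 / 4 * (f r ^ 2 / (r * log (T / r) ^ 2))) ≤
      ∫⁻ r in Ioo 0 b, ENNReal.ofReal (r * f' r ^ 2) := by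
  have hf : AEMeasurable f (volume.restrict (Ioo 0 b)) :=
    ContinuousOn.aemeasurable (fun r hr =>
      (hff' r (Ioo_subset_Ioc_self hr)).continuousAt.continuousWithinAt) measurableSet_Ioo
  have hcover : AECover (volume.restrict (Ioo 0 b)) (𝓝[>] 0) fun a => Ioo a b :=
    aecover_Ioo_of_Ioo (tendsto_id.mono_left nhdsWithin_le_nhds) tendsto_const_nhds
  refine le_of_tendsto (hcover.lintegral_tendsto_of_countably_generated (by fun_prop)) ?_
  filter_upwards [Ioo_mem_nhdsGT hb] with a ⟨ha, hab⟩
  have hIcc : Icc a b ⊆ Ioc 0 b := fun r hr => ⟨ha.trans_le hr.1, hr.2⟩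
  have hIoo : Ioo a b ⊆ Ioo 0 b := Ioo_subset_Ioo_left ha.le
  rw [Measure.restrict_restrict_of_subset hIoo]
  exact (setLIntegral_hardy_le_of_pos ha hab.le hbT (fun r hr => hff' r (hIcc hr))
    (hf'.mono hIcc) hfb).trans (lintegral_mono_set hIoo)

end Hardy

/-! ### Radial and tangential derivatives in the plane -/

lemma sum_sq_norm_apply_le_of_orthonormal {𝕜 E ι : Type*} [RCLike 𝕜] [NormedAddCommGroup E]
    [InnerProductSpace 𝕜 E] [CompleteSpace E] (L : E →L[𝕜] 𝕜) {v : ι → E} (hv : Orthonormal 𝕜 v)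
    (s : Finset ι) : ∑ i ∈ s, ‖L (v i)‖ ^ 2 ≤ ‖L‖ ^ 2 := by
  have hbessel := hv.sum_inner_products_le (s := s) ((InnerProductSpace.toDual 𝕜 E).symm L)
  simpa only [LinearIsometryEquiv.norm_map, norm_inner_symm (v _),
    InnerProductSpace.toDual_symm_apply] using hbessel

lemma polarPt_eq_smul (r θ : ℝ) : polarPt r θ = r • polarPt 1 θ := by
  ext i
  fin_cases i <;> simp [polarPt]

lemma norm_polarPt (r θ : ℝ) : ‖polarPt r θ‖ = |r| := by
  rw [EuclideanSpace.norm_eq, ← sqrt_sq_eq_abs]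
  congr 1
  simp [polarPt, Fin.sum_univ_two, mul_pow, ← mul_add]

lemma polarPt_ne_zero {r : ℝ} (hr : r ≠ 0) (θ : ℝ) : polarPt r θ ≠ 0 :=
  norm_ne_zero_iff.1 (by rwa [norm_polarPt, abs_ne_zero])

lemma periodic_polarPt (r : ℝ) : Function.Periodic (polarPt r) (2 * π) := fun θ => by
  simp [polarPt]

/-- The vector `x` rotated by a right angle counterclockwise. -/
def perp (x : E2) : E2 := !₂[-x 1, x 0]

lemma norm_perp (x : E2) : ‖perp x‖ = ‖x‖ := by
  simp [EuclideanSpace.norm_eq, perp, Fin.sum_univ_two, add_comm]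

lemma inner_perp_right (x : E2) : inner ℝ x (perp x) = 0 := by
  simp [perp, PiLp.inner_apply, Fin.sum_univ_two, mul_comm]

lemma continuous_perp : Continuous perp := by
  unfold perp
  fun_prop

@[fun_prop]
lemma continuous_polarPt_comp {X : Type*} [TopologicalSpace X] {r θ : X → ℝ} (hr : Continuous r)
    (hθ : Continuous θ) : Continuous fun x => polarPt (r x) (θ x) := by
  unfold polarPt
  fun_prop

lemma hasDerivAt_polarPt_radius (r θ : ℝ) : HasDerivAt (fun s => polarPt s θ) (polarPt 1 θ) r := by
  rw [funext fun s => polarPt_eq_smul s θ]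
  simpa using (hasDerivAt_id r).smul_const (polarPt 1 θ)

lemma hasDerivAt_polarPt_angle (r θ : ℝ) : HasDerivAt (polarPt r) (perp (polarPt r θ)) θ := by
  have hcoord : HasDerivAt (fun t => ![r * cos t, r * sin t]) ![-(r * sin θ), r * cos θ] θ := by
    simp only [hasDerivAt_pi, Fin.forall_fin_two, Matrix.cons_val_zero, Matrix.cons_val_one,
      ← mul_neg]
    exact ⟨(hasDerivAt_cos θ).const_mul r, (hasDerivAt_sin θ).const_mul r⟩
  exact (EuclideanSpace.equiv (Fin 2) ℝ).symm.hasFDerivAt.comp_hasDerivAt θ hcoord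

/-- The radial derivative `∂u/∂r`, that is `∇u(x) · x / ‖x‖`; its value at the origin is `0`. -/
def radialDeriv (u : E2 → ℝ) (x : E2) : ℝ := fderiv ℝ u x (‖x‖⁻¹ • x)

/-- The tangential derivative `r⁻¹ ∂u/∂θ`, that is `∇u(x) · x^⊥ / ‖x‖`; its value at the origin is
`0`. -/
def tangentialDeriv (u : E2 → ℝ) (x : E2) : ℝ := fderiv ℝ u x (‖x‖⁻¹ • perp x)

lemma lintegral_eq_lintegral_polarPt (F : E2 → ℝ≥0∞) :
    ∫⁻ x, F x =
      ∫⁻ p in Ioi (0 : ℝ) ×ˢ Ioo (-π) π, ENNReal.ofReal p.1 * F (polarPt p.1 p.2) := by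
  have hequiv := ((EuclideanSpace.volume_preserving_symm_measurableEquiv_toLp (Fin 2)).trans
    (volume_preserving_finTwoArrow ℝ)).symm
  rw [← hequiv.lintegral_comp_emb (MeasurableEquiv.measurableEmbedding _),
    ← lintegral_comp_polarCoord_symm]
  rfl

lemma setLIntegral_ball_eq_lintegral_polarPt (R : ℝ) (F : E2 → ℝ≥0∞) :
    ∫⁻ x in ball 0 R, F x =
      ∫⁻ p in Ioo 0 R ×ˢ Ioo (-π) π, ENNReal.ofReal p.1 * F (polarPt p.1 p.2) := by
  have hmem : ∀ p ∈ Ioi (0 : ℝ) ×ˢ Ioo (-π) π,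
      ENNReal.ofReal p.1 * (ball 0 R).indicator F (polarPt p.1 p.2) =
        (Iio R ×ˢ univ).indicator (fun p => ENNReal.ofReal p.1 * F (polarPt p.1 p.2)) p := by
    rintro ⟨r, θ⟩ ⟨hr : 0 < r, -⟩
    by_cases hrR : r < R <;> simp [norm_polarPt, abs_of_pos hr, hrR, indicator]
  rw [← lintegral_indicator measurableSet_ball, lintegral_eq_lintegral_polarPt,
    setLIntegral_congr_fun (measurableSet_Ioi.prod measurableSet_Ioo) hmem,
    setLIntegral_indicator (measurableSet_Iio.prod .univ), prod_inter_prod, univ_inter,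
    inter_comm, Ioi_inter_Iio]

lemma measurable_ofReal_mul_comp_polarPt {F : E2 → ℝ≥0∞} (hF : Measurable F) :
    Measurable fun p : ℝ × ℝ => ENNReal.ofReal p.1 * F (polarPt p.1 p.2) :=
  measurable_fst.ennreal_ofReal.mul
    (hF.comp (continuous_polarPt_comp continuous_fst continuous_snd).measurable)

lemma setLIntegral_ball_eq_lintegral_radius_angle (R : ℝ) {F : E2 → ℝ≥0∞} (hF : Measurable F) :
    ∫⁻ x in ball 0 R, F x =
      ∫⁻ r in Ioo 0 R, ∫⁻ θ in Ioo (-π) π, ENNReal.ofReal r * F (polarPt r θ) :=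
  (setLIntegral_ball_eq_lintegral_polarPt R F).trans
    (setLIntegral_prod _ (measurable_ofReal_mul_comp_polarPt hF).aemeasurable)

lemma setLIntegral_ball_eq_lintegral_angle_radius (R : ℝ) {F : E2 → ℝ≥0∞} (hF : Measurable F) :
    ∫⁻ x in ball 0 R, F x =
      ∫⁻ θ in Ioo (-π) π, ∫⁻ r in Ioo 0 R, ENNReal.ofReal r * F (polarPt r θ) :=
  (setLIntegral_ball_eq_lintegral_polarPt R F).trans
    (setLIntegral_prod_symm _ (measurable_ofReal_mul_comp_polarPt hF).aemeasurable)

lemma orthonormal_radial_tangential {x : E2} (hx : x ≠ 0) :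
    Orthonormal ℝ ![‖x‖⁻¹ • x, ‖x‖⁻¹ • perp x] := by
  have hx' : ‖x‖ ≠ 0 := norm_ne_zero_iff.2 hx
  simp [orthonormal_vecCons_iff, norm_smul, norm_perp, inner_smul_left, inner_smul_right,
    inner_perp_right, hx']

lemma radialDeriv_sq_add_tangentialDeriv_sq_le (u : E2 → ℝ) (x : E2) :
    radialDeriv u x ^ 2 + tangentialDeriv u x ^ 2 ≤ ‖fderiv ℝ u x‖ ^ 2 := by
  rcases eq_or_ne x 0 with rfl | hx
  · simp [radialDeriv, tangentialDeriv]
  · simpa [Fin.sum_univ_two, radialDeriv, tangentialDeriv] using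
      sum_sq_norm_apply_le_of_orthonormal (fderiv ℝ u x) (orthonormal_radial_tangential hx)
        Finset.univ

section Derivatives

variable {u : E2 → ℝ}

lemma continuousOn_radialDeriv (hu : ContDiff ℝ 1 u) : ContinuousOn (radialDeriv u) {0}ᶜ :=
  (hu.continuous_fderiv one_ne_zero).continuousOn.clm_apply
    ((continuousOn_id.norm.inv₀ fun _ hx => norm_ne_zero_iff.2 hx).smul continuousOn_id)

lemma continuousOn_tangentialDeriv (hu : ContDiff ℝ 1 u) :
    ContinuousOn (tangentialDeriv u) {0}ᶜ :=
  (hu.continuous_fderiv one_ne_zero).continuousOn.clm_apply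
    ((continuousOn_id.norm.inv₀ fun _ hx => norm_ne_zero_iff.2 hx).smul
      continuous_perp.continuousOn)

lemma hasDerivAt_comp_polarPt_radius (hu : Differentiable ℝ u) {r : ℝ} (hr : 0 < r) (θ : ℝ) :
    HasDerivAt (fun s => u (polarPt s θ)) (radialDeriv u (polarPt r θ)) r := by
  refine ((hu _).hasFDerivAt.comp_hasDerivAt r (hasDerivAt_polarPt_radius r θ)).congr_deriv ?_
  rw [radialDeriv, norm_polarPt, abs_of_pos hr, polarPt_eq_smul r, inv_smul_smul₀ hr.ne']

lemma hasDerivAt_comp_polarPt_angle (hu : Differentiable ℝ u) {r : ℝ} (hr : 0 < r) (θ : ℝ) :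
    HasDerivAt (fun t => u (polarPt r t)) (r * tangentialDeriv u (polarPt r θ)) θ := by
  refine ((hu _).hasFDerivAt.comp_hasDerivAt θ (hasDerivAt_polarPt_angle r θ)).congr_deriv ?_
  rw [tangentialDeriv, norm_polarPt, abs_of_pos hr, map_smul, smul_eq_mul,
    mul_inv_cancel_left₀ hr.ne']

lemma measurable_radialDeriv (hu : ContDiff ℝ 1 u) : Measurable (radialDeriv u) :=
  measurable_of_continuousOn_compl_singleton 0 (continuousOn_radialDeriv hu)

lemma measurable_tangentialDeriv (hu : ContDiff ℝ 1 u) : Measurable (tangentialDeriv u) :=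
  measurable_of_continuousOn_compl_singleton 0 (continuousOn_tangentialDeriv hu)

theorem setLIntegral_ball_hardy_le (hu : ContDiff ℝ 1 u) {R T : ℝ} (hR : 0 < R) (hRT : R < T)
    (hbdry : ∀ x ∈ sphere 0 R, u x = 0) :
    ∫⁻ x in ball 0 R, ENNReal.ofReal (1 / 4 * (u x ^ 2 / (‖x‖ ^ 2 * log (T / ‖x‖) ^ 2))) ≤
      ∫⁻ x in ball 0 R, ENNReal.ofReal (radialDeriv u x ^ 2) := by
  have hu_meas := hu.continuous.measurable
  have hu'_meas := measurable_radialDeriv hu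
  rw [setLIntegral_ball_eq_lintegral_angle_radius R (by fun_prop),
    setLIntegral_ball_eq_lintegral_angle_radius R (by fun_prop)]
  refine lintegral_mono fun θ => ?_
  have hcont : ContinuousOn (fun r => radialDeriv u (polarPt r θ)) (Ioc 0 R) :=
    (continuousOn_radialDeriv hu).comp (by fun_prop) fun r hr => polarPt_ne_zero hr.1.ne' θ
  calc ∫⁻ r in Ioo 0 R, ENNReal.ofReal r * ENNReal.ofReal (1 / 4 * (u (polarPt r θ) ^ 2 /
          (‖polarPt r θ‖ ^ 2 * log (T / ‖polarPt r θ‖) ^ 2)))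
      = ∫⁻ r in Ioo 0 R,
          ENNReal.ofReal (1 / 4 * (u (polarPt r θ) ^ 2 / (r * log (T / r) ^ 2))) := by
        refine setLIntegral_congr_fun measurableSet_Ioo fun r hr => ?_
        simp only [norm_polarPt, abs_of_pos hr.1, ← ENNReal.ofReal_mul hr.1.le]
        have hr_ne : r ≠ 0 := hr.1.ne'
        congr 1
        field_simp
    _ ≤ ∫⁻ r in Ioo 0 R, ENNReal.ofReal (r * radialDeriv u (polarPt r θ) ^ 2) :=
        setLIntegral_hardy_le hR hRT
          (fun r hr => hasDerivAt_comp_polarPt_radius (hu.differentiable one_ne_zero) hr.1 θ)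
          hcont (hbdry _ (by simp [norm_polarPt, hR.le]))
    _ = ∫⁻ r in Ioo 0 R,
          ENNReal.ofReal r * ENNReal.ofReal (radialDeriv u (polarPt r θ) ^ 2) :=
        setLIntegral_congr_fun measurableSet_Ioo fun r hr => ENNReal.ofReal_mul hr.1.le

lemma setLIntegral_circle_sq_le (hu : ContDiff ℝ 1 u) {r : ℝ} (hr : 0 < r)
    (havg : ∫ θ in 0..2 * π, u (polarPt r θ) = 0) :
    ∫⁻ θ in Ioo (-π) π, ENNReal.ofReal (u (polarPt r θ) ^ 2) ≤
      ∫⁻ θ in Ioo (-π) π, ENNReal.ofReal ((r * tangentialDeriv u (polarPt r θ)) ^ 2) := by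
  have hper : Function.Periodic (fun θ => u (polarPt r θ)) (2 * π) := (periodic_polarPt r).comp u
  have hmean : ∫ θ in -π..π, u (polarPt r θ) = 0 := by
    have hshift := hper.intervalIntegral_add_eq (-π) 0
    rwa [neg_add_eq_sub, two_mul, add_sub_cancel_right, zero_add, ← two_mul, havg] at hshift
  have hends : u (polarPt r (-π)) = u (polarPt r π) := by
    simpa [two_mul] using (hper (-π)).symm
  have hcont : Continuous fun θ => r * tangentialDeriv u (polarPt r θ) :=
    continuous_const.mul ((continuousOn_tangentialDeriv hu).comp_continuous (by fun_prop)
      (polarPt_ne_zero hr.ne'))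
  have hconst : (π + π) / (2 * π) = 1 := by
    rw [← two_mul, div_self two_pi_pos.ne']
  have hu_cont := hu.continuous
  simpa [hconst] using setLIntegral_sq_le_of_intervalIntegral_eq_zero (neg_lt_self pi_pos)
    (f := fun θ => u (polarPt r θ)) (by fun_prop)
    (fun θ _ => hasDerivAt_comp_polarPt_angle (hu.differentiable one_ne_zero) hr θ)
    hcont.continuousOn hends hmean

theorem setLIntegral_ball_sq_div_norm_sq_le (hu : ContDiff ℝ 1 u) {R : ℝ}
    (havg : ∀ r ∈ Ioo 0 R, ∫ θ in 0..2 * π, u (polarPt r θ) = 0) :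
    ∫⁻ x in ball 0 R, ENNReal.ofReal (u x ^ 2 / ‖x‖ ^ 2) ≤
      ∫⁻ x in ball 0 R, ENNReal.ofReal (tangentialDeriv u x ^ 2) := by
  have hu_meas := hu.continuous.measurable
  have hu'_meas := measurable_tangentialDeriv hu
  rw [setLIntegral_ball_eq_lintegral_radius_angle R (by fun_prop),
    setLIntegral_ball_eq_lintegral_radius_angle R (by fun_prop)]
  refine setLIntegral_mono' measurableSet_Ioo fun r hr => ?_
  have hr_ne : r ≠ 0 := hr.1.ne'
  have hfactor (y : ℝ) : ENNReal.ofReal r * ENNReal.ofReal y =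
      ENNReal.ofReal r⁻¹ * ENNReal.ofReal (r ^ 2 * y) := by
    rw [← ENNReal.ofReal_mul hr.1.le, ← ENNReal.ofReal_mul (inv_nonneg.2 hr.1.le), sq, mul_assoc,
      inv_mul_cancel_left₀ hr_ne]
  calc ∫⁻ θ in Ioo (-π) π,
        ENNReal.ofReal r * ENNReal.ofReal (u (polarPt r θ) ^ 2 / ‖polarPt r θ‖ ^ 2)
      = ENNReal.ofReal r⁻¹ * ∫⁻ θ in Ioo (-π) π, ENNReal.ofReal (u (polarPt r θ) ^ 2) := by
        simp only [norm_polarPt, sq_abs, hfactor, mul_div_cancel₀ _ (pow_ne_zero 2 hr_ne)]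
        exact lintegral_const_mul' _ _ ENNReal.ofReal_ne_top
    _ ≤ ENNReal.ofReal r⁻¹ * ∫⁻ θ in Ioo (-π) π,
          ENNReal.ofReal ((r * tangentialDeriv u (polarPt r θ)) ^ 2) :=
        mul_le_mul_right (setLIntegral_circle_sq_le hu hr.1 (havg r hr)) _
    _ = ∫⁻ θ in Ioo (-π) π,
          ENNReal.ofReal r * ENNReal.ofReal (tangentialDeriv u (polarPt r θ) ^ 2) := by
        simp only [hfactor, mul_pow]
        exact (lintegral_const_mul' _ _ ENNReal.ofReal_ne_top).symm

theorem setLIntegral_ball_hardy_add_sq_div_norm_sq_le (hu : ContDiff ℝ 1 u) {R T : ℝ}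
    (hR : 0 < R) (hRT : R < T) (hbdry : ∀ x ∈ sphere 0 R, u x = 0)
    (havg : ∀ r ∈ Ioo 0 R, ∫ θ in 0..2 * π, u (polarPt r θ) = 0) :
    ∫⁻ x in ball 0 R, ENNReal.ofReal
        (1 / 4 * (u x ^ 2 / (‖x‖ ^ 2 * log (T / ‖x‖) ^ 2)) + u x ^ 2 / ‖x‖ ^ 2) ≤
      ∫⁻ x in ball 0 R, ENNReal.ofReal (‖fderiv ℝ u x‖ ^ 2) := by
  have hu_meas := hu.continuous.measurable
  have hu'_meas := measurable_radialDeriv hu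
  calc ∫⁻ x in ball 0 R, ENNReal.ofReal
        (1 / 4 * (u x ^ 2 / (‖x‖ ^ 2 * log (T / ‖x‖) ^ 2)) + u x ^ 2 / ‖x‖ ^ 2)
      = (∫⁻ x in ball 0 R,
            ENNReal.ofReal (1 / 4 * (u x ^ 2 / (‖x‖ ^ 2 * log (T / ‖x‖) ^ 2)))) +
          ∫⁻ x in ball 0 R, ENNReal.ofReal (u x ^ 2 / ‖x‖ ^ 2) := by
        rw [← lintegral_add_left (by fun_prop)]
        exact lintegral_congr fun x => ENNReal.ofReal_add (by positivity) (by positivity)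
    _ ≤ (∫⁻ x in ball 0 R, ENNReal.ofReal (radialDeriv u x ^ 2)) +
          ∫⁻ x in ball 0 R, ENNReal.ofReal (tangentialDeriv u x ^ 2) :=
        add_le_add (setLIntegral_ball_hardy_le hu hR hRT hbdry)
          (setLIntegral_ball_sq_div_norm_sq_le hu havg)
    _ ≤ ∫⁻ x in ball 0 R, ENNReal.ofReal (‖fderiv ℝ u x‖ ^ 2) := by
        rw [← lintegral_add_left (by fun_prop)]
        refine lintegral_mono fun x => ?_
        rw [← ENNReal.ofReal_add (sq_nonneg _) (sq_nonneg _)]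
        exact ENNReal.ofReal_le_ofReal (radialDeriv_sq_add_tangentialDeriv_sq_le u x)

end Derivatives

theorem critical_hardy_sphere_avg_zero_general {u : E2 → ℝ} (hu : ContDiff ℝ 1 u) {R : ℝ}
    (hR : 0 < R) (hbdry : ∀ x ∈ sphere 0 R, u x = 0)
    (havg : ∀ r ∈ Ioo 0 R, ∫ θ in 0..2 * π, u (polarPt r θ) = 0) :
    5 / 4 * ∫ x in ball 0 R, u x ^ 2 / (‖x‖ ^ 2 * log (exp 1 * R / ‖x‖) ^ 2) ≤
      ∫ x in ball 0 R, ‖fderiv ℝ u x‖ ^ 2 := by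
  have hu_meas := hu.continuous.measurable
  have hRT : R < exp 1 * R := lt_mul_of_one_lt_left hR (one_lt_exp_iff.2 one_pos)
  have hgrad : IntegrableOn (fun x => ‖fderiv ℝ u x‖ ^ 2) (ball 0 R) :=
    ((hu.continuous_fderiv one_ne_zero).norm.pow 2).continuousOn.integrableOn_compact
      (isCompact_closedBall 0 R) |>.mono_set ball_subset_closedBall
  rw [← integral_const_mul]
  refine integral_mono_of_lintegral_ofReal_le (ae_of_all _ fun x => by positivity)
    (Measurable.aestronglyMeasurable (by fun_prop)) (ae_of_all _ fun x => by positivity) hgrad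
    (le_trans ?_ (setLIntegral_ball_hardy_add_sq_div_norm_sq_le hu hR hRT hbdry havg))
  refine setLIntegral_mono' measurableSet_ball fun x hx => ENNReal.ofReal_le_ofReal ?_
  have hweight := div_sq_mul_log_sq_le (sq_nonneg (u x)) (norm_nonneg x)
    (mem_ball_zero_iff.1 hx).le
  linarith

/-- For every smooth `u` compactly supported in the unit
ball `B₁² ⊂ ℝ²` with `∫_0^{2π} u(rθ) dθ = 0` for all `r ≥ 0`, one has
`(5/4) ∫_{B₁²} |u|²/(|x|² (log(e/|x|))²) dx ≤ ∫_{B₁²} |∇u|² dx`. -/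
theorem critical_hardy_sphere_avg_zero
    (u : E2 → ℝ) (hu : ContDiff ℝ (⊤ : ℕ∞) u) (hsupp : HasCompactSupport u)
    (hball : tsupport u ⊆ ball (0 : E2) 1)
    (havg : ∀ r : ℝ, 0 ≤ r → (∫ θ in (0:ℝ)..(2 * Real.pi), u (polarPt r θ)) = 0) :
    (5 / 4 : ℝ) *
        (∫ x in ball (0 : E2) 1,
          (u x) ^ 2 / (‖x‖ ^ 2 * Real.log (Real.exp 1 / ‖x‖) ^ 2)) ≤
      ∫ x in ball (0 : E2) 1, ‖fderiv ℝ u x‖ ^ 2 := by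
  simpa only [mul_one] using critical_hardy_sphere_avg_zero_general (hu.of_le (by simp)) one_pos
    (fun x hx => image_eq_zero_of_notMem_tsupport fun hxu =>
      (mem_ball.1 (hball hxu)).ne (mem_sphere.1 hx))
    fun r hr => havg r hr.1.le

end
end

section
/- Let $N \ge 2$. For every $u \in C_0^\infty(\mathbb{R}^N)$ satisfying $\int_{\mathbb{S}^{N-1}} u(r\omega)\,dS_\omega = 0$ for all $r \ge 0$, one has $\frac{N^2}{4}\int_{\mathbb{R}^N} \frac{|u(x)|^2}{|x|^2}\,dx \le \int_{\mathbb{R}^N} |\nabla u(x)|^2\,dx$. Moreover the constant $\frac{N^2}{4}$ is optimal: for every $\varepsilon > 0$ there exists a nonzero admissible $u$ (which may be taken of the form $u(x) = g_2(\omega)f_a(r)$ with $f_a(r) = r$ on $[0,1]$ and $f_a(r) = r^{-a}$ on $(1,\infty)$, $a > \frac{N-2}{2}$) whose Rayleigh quotient $\int |\nabla u|^2 / \int |u|^2|x|^{-2}$ is less than $\frac{N^2}{4}+\varepsilon$, and the best constant is not attained. -/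
/-!
Put `F = ‖x‖ ^ (N / 2) * u`. Since `u` has spherical average zero, `F` has mean zero for every
Gaussian weight `exp (-t ‖x‖²)`, so the Gaussian Poincaré inequality gives
`2 t ∫ F² exp (-t ‖x‖²) ≤ ∫ |∇F|² exp (-t ‖x‖²)`. Integrating against `t ^ (N / 2 - 1) dt` turns the
Gaussian weights into powers of `‖x‖`, and the result is the Hardy inequality once `|∇F|²` is
expanded and its cross term is computed by differentiating a dilation. For small `t` the
inequality is strict unless `∇F = 0`, so the constant is not attained.

The Gaussian Poincaré inequality on the line follows from `∫ (f' - q)² ≥ 0`, where `q` is the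
difference quotient of `f` at `0`, and tensorizes.

The constant is approached by `⟪v, x⟫ ‖x‖ ^ (-N / 2) φ(k log ‖x‖)` as `k → 0`: summing over an
orthonormal basis of vectors `v` makes all integrands radial, and for the sums the quotient is
`N² / 4 + k² ∫ φ'² / ∫ φ²`.
-/

open MeasureTheory Metric
open scoped ENNReal

noncomputable section

/-- `u` has spherical average zero: `∫_{S^{N-1}} u(rω) dS_ω = 0` for all `r ≥ 0`. -/
def SphereAvgZero {N : ℕ} (u : EuclideanSpace ℝ (Fin N) → ℝ) : Prop :=
  ∀ r : ℝ, 0 ≤ r →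
    (∫ ω : sphere (0 : EuclideanSpace ℝ (Fin N)) 1,
      u (r • (ω : EuclideanSpace ℝ (Fin N)))
      ∂((volume : Measure (EuclideanSpace ℝ (Fin N))).toSphere)) = 0

section Hardy

open ProbabilityTheory Filter Topology

lemma hasFDerivAt_smul_of_eq_zero {E F : Type*} [NormedAddCommGroup E] [NormedSpace ℝ E]
    [NormedAddCommGroup F] [NormedSpace ℝ F] {q : E → ℝ} {f : E → F} {f' : E →L[ℝ] F} {a : E}
    (hf : HasFDerivAt f f' a) (hfa : f a = 0) (hq : ContinuousAt q a) :
    HasFDerivAt (fun x ↦ q x • f x) (q a • f') a := by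
  have hsub : (fun x ↦ q x - q a) =o[𝓝 a] (1 : E → ℝ) :=
    (Asymptotics.isLittleO_one_iff ℝ).2 (by simpa using hq.sub_const (q a))
  have hO : f =O[𝓝 a] fun x ↦ x - a := by simpa [hfa] using hf.isBigO_sub
  have hrem : (fun x ↦ (q x - q a) • f x) =o[𝓝 a] fun x ↦ x - a := by
    simpa using hsub.smul_isBigO hO
  refine .of_isLittleO ((hrem.add ((hf.const_smul (q a)).isLittleO)).congr_left fun x ↦ ?_)
  simp [hfa, sub_smul]

section GaussianPoincareLine

variable {f : ℝ → ℝ}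

lemma hasDerivAt_gaussianPDFReal (x : ℝ) :
    HasDerivAt (gaussianPDFReal 0 1) (-x * gaussianPDFReal 0 1 x) x := by
  have hexp : HasDerivAt (fun y : ℝ ↦ -(y - 0) ^ 2 / (2 * ((1 : NNReal) : ℝ))) (-x) x := by
    convert! ((((hasDerivAt_id x).sub_const 0).pow 2).neg.div_const _) using 1
    norm_num [neg_div]
  rw [gaussianPDFReal_def]
  convert! (hexp.exp.const_mul (√(2 * Real.pi * ((1 : NNReal) : ℝ)))⁻¹) using 1
  ring

lemma hasDerivAt_sub_mul_dslope_mul_gaussianPDFReal (hf : Differentiable ℝ f) (x : ℝ) :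
    HasDerivAt (fun y ↦ (f y - f 0) * (dslope f 0 y * gaussianPDFReal 0 1 y))
      ((2 * deriv f x * dslope f 0 x - dslope f 0 x ^ 2 - (f x - f 0) ^ 2)
        * gaussianPDFReal 0 1 x) x := by
  have hfx : HasDerivAt (fun y ↦ f y - f 0) (deriv f x) x := (hf x).hasDerivAt.sub_const _
  have hw := hasDerivAt_gaussianPDFReal x
  rcases eq_or_ne x 0 with rfl | hx
  · have hq : ContinuousAt (fun y ↦ dslope f 0 y * gaussianPDFReal 0 1 y) 0 :=
      (continuousAt_dslope_same.2 (hf 0)).mul hw.continuousAt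
    have h0 := (hasFDerivAt_smul_of_eq_zero hfx.hasFDerivAt (sub_self _) hq).hasDerivAt
    convert! h0 using 1
    · ext y
      simp [mul_comm]
    · simp only [dslope_same, smul_apply,
        ContinuousLinearMap.toSpanSingleton_apply, smul_eq_mul]
      ring
  · have hslope : HasDerivAt (dslope f 0) ((deriv f x - dslope f 0 x) / x) x := by
      have heq : dslope f 0 =ᶠ[𝓝 x] fun y ↦ (f y - f 0) / y := by
        filter_upwards [dslope_eventuallyEq_slope_of_ne f hx] with y hy
        rw [hy, slope_def_field, sub_zero]
      refine ((hfx.div (hasDerivAt_id x) hx).congr_of_eventuallyEq heq).congr_deriv ?_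
      rw [heq.eq_of_nhds]
      simp only [id]
      field_simp
    convert! hfx.mul (hslope.mul hw) using 1
    have hxq : f x - f 0 = x * dslope f 0 x := by
      simpa using (sub_smul_dslope f 0 x).symm
    simp only [Pi.mul_apply, hxq]
    field_simp
    ring

lemma abs_dslope_le {C : ℝ} (hf : Differentiable ℝ f) (hC : ∀ x, |deriv f x| ≤ C) (a x : ℝ) :
    |dslope f a x| ≤ C := by
  rcases eq_or_ne x a with rfl | hx
  · simpa using hC x
  · have hle := Convex.norm_image_sub_le_of_norm_deriv_le (fun y _ ↦ hf y)
      (fun y _ ↦ by simpa using hC y) convex_univ (Set.mem_univ a) (Set.mem_univ x)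
    rw [dslope_of_ne f hx, slope_def_field, abs_div, div_le_iff₀ (abs_pos.2 (sub_ne_zero.2 hx))]
    simpa using hle

lemma integrable_mul_mul_gaussianPDFReal {g h : ℝ → ℝ} (hg : Continuous g) (hh : Continuous h)
    {C C' : ℝ} (hC : ∀ x, |g x| ≤ C) (hC' : ∀ x, |h x| ≤ C') :
    Integrable fun x ↦ g x * h x * gaussianPDFReal 0 1 x :=
  (integrable_gaussianPDFReal 0 1).bdd_mul (hg.mul hh).aestronglyMeasurable <|
    ae_of_all _ fun x ↦ (norm_mul_le _ _).trans <|
      mul_le_mul (hC x) (hC' x) (norm_nonneg _) ((abs_nonneg _).trans (hC x))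

lemma continuous_dslope {a : ℝ} (hf : Differentiable ℝ f) : Continuous (dslope f a) :=
  continuous_iff_continuousAt.2 fun x ↦ by
    rcases eq_or_ne x a with rfl | hx
    · exact continuousAt_dslope_same.2 (hf x)
    · exact (continuousAt_dslope_of_ne hx).2 hf.continuous.continuousAt

lemma integral_sub_sq_gaussianReal_le (hf : ContDiff ℝ 1 f) {C C' : ℝ} (hC : ∀ x, |f x| ≤ C)
    (hC' : ∀ x, |deriv f x| ≤ C') :
    ∫ x, (f x - f 0) ^ 2 ∂gaussianReal 0 1 ≤ ∫ x, deriv f x ^ 2 ∂gaussianReal 0 1 := by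
  have hd : Differentiable ℝ f := hf.differentiable one_ne_zero
  have hd' : Continuous (deriv f) := hf.continuous_deriv le_rfl
  have hq : Continuous (dslope f 0) := continuous_dslope hd
  have hqC := abs_dslope_le hd hC' 0
  have hgC (x : ℝ) : |f x - f 0| ≤ C + C := (abs_sub _ _).trans (add_le_add (hC x) (hC 0))
  have hg : Continuous fun x ↦ f x - f 0 := by fun_prop
  have hint_g := integrable_mul_mul_gaussianPDFReal hg hg hgC hgC
  have hint_d := integrable_mul_mul_gaussianPDFReal hd' hd' hC' hC'
  have hint_q := integrable_mul_mul_gaussianPDFReal hq hq hqC hqC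
  have hint_dq := integrable_mul_mul_gaussianPDFReal hd' hq hC' hqC
  have hint_deriv : Integrable fun x ↦ (2 * deriv f x * dslope f 0 x - dslope f 0 x ^ 2
      - (f x - f 0) ^ 2) * gaussianPDFReal 0 1 x :=
    (((hint_dq.const_mul 2).sub hint_q).sub hint_g).congr
      (ae_of_all _ fun x ↦ by simp only [Pi.sub_apply]; ring)
  have hzero := integral_eq_zero_of_hasDerivAt_of_integrable
    (hasDerivAt_sub_mul_dslope_mul_gaussianPDFReal hd) hint_deriv
    ((integrable_mul_mul_gaussianPDFReal hg hq hgC hqC).congr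
      (ae_of_all _ fun x ↦ mul_assoc _ _ _))
  simp only [integral_gaussianReal_eq_integral_smul one_ne_zero, smul_eq_mul,
    mul_comm (gaussianPDFReal _ _ _), sq]
  rw [← sub_nonneg, ← integral_sub hint_d hint_g]
  refine hzero.symm.trans_le (integral_mono hint_deriv (hint_d.sub hint_g) fun x ↦ ?_)
  have hw := gaussianPDFReal_nonneg 0 1 x
  simp only [← sub_mul]
  refine mul_le_mul_of_nonneg_right ?_ hw
  linarith [sq_nonneg (deriv f x - dslope f 0 x)]

theorem variance_gaussianReal_le (hf : ContDiff ℝ 1 f) {C C' : ℝ} (hC : ∀ x, |f x| ≤ C)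
    (hC' : ∀ x, |deriv f x| ≤ C') :
    Var[f; gaussianReal 0 1] ≤ ∫ x, deriv f x ^ 2 ∂gaussianReal 0 1 := by
  have hmeas : AEStronglyMeasurable f (gaussianReal 0 1) := hf.continuous.aestronglyMeasurable
  calc Var[f; gaussianReal 0 1] = Var[fun x ↦ f x - f 0; gaussianReal 0 1] :=
        (variance_sub_const hmeas _).symm
    _ ≤ ∫ x, (f x - f 0) ^ 2 ∂gaussianReal 0 1 :=
        variance_le_expectation_sq (hmeas.sub aestronglyMeasurable_const)
    _ ≤ ∫ x, deriv f x ^ 2 ∂gaussianReal 0 1 := integral_sub_sq_gaussianReal_le hf hC hC'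

end GaussianPoincareLine

section Poincare

variable {E F ι κ : Type*} [NormedAddCommGroup E] [NormedSpace ℝ E] [NormedAddCommGroup F]
  [NormedSpace ℝ F]

/-- `f` is of class `C¹`, and `f` and its derivative are bounded: the test functions of the
Poincaré inequality, chosen because they are stable under integration in some of the variables. -/
structure BoundedC1 (f : E → ℝ) : Prop where
  contDiff : ContDiff ℝ 1 f
  exists_norm_le : ∃ C, ∀ x, ‖f x‖ ≤ C
  exists_norm_fderiv_le : ∃ C, ∀ x, ‖fderiv ℝ f x‖ ≤ C

/-- The Poincaré inequality `Var[f] ≤ ∑ᵢ ∫ (∂f/∂eᵢ)²` for the measure `μ` and the frame `e`.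
Recording the directions instead of the norm of the gradient makes it stable under products,
whatever norms the factors carry. -/
def PoincareAlong [Fintype ι] [MeasurableSpace E] (μ : Measure E) (e : ι → E) : Prop :=
  ∀ f : E → ℝ, BoundedC1 f → Var[f; μ] ≤ ∑ i, ∫ x, fderiv ℝ f x (e i) ^ 2 ∂μ

namespace BoundedC1

variable {f : E → ℝ}

lemma differentiable (hf : BoundedC1 f) : Differentiable ℝ f :=
  hf.contDiff.differentiable one_ne_zero

lemma continuous_fderiv (hf : BoundedC1 f) : Continuous (fderiv ℝ f) :=
  hf.contDiff.continuous_fderiv one_ne_zero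

lemma fderiv_comp_add_clm (hf : BoundedC1 f) (a : E) (L : F →L[ℝ] E) (y : F) :
    fderiv ℝ (fun y ↦ f (a + L y)) y = (fderiv ℝ f (a + L y)).comp L :=
  ((hf.differentiable _).hasFDerivAt.comp y (L.hasFDerivAt.const_add a)).fderiv

lemma comp_add_clm (hf : BoundedC1 f) (a : E) (L : F →L[ℝ] E) :
    BoundedC1 fun y ↦ f (a + L y) where
  contDiff := hf.contDiff.comp (by fun_prop)
  exists_norm_le := hf.exists_norm_le.imp fun _ hC y ↦ hC _
  exists_norm_fderiv_le := by
    obtain ⟨C, hC⟩ := hf.exists_norm_fderiv_le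
    refine ⟨C * ‖L‖, fun y ↦ ?_⟩
    rw [hf.fderiv_comp_add_clm]
    exact (ContinuousLinearMap.opNorm_comp_le _ _).trans
      (mul_le_mul_of_nonneg_right (hC _) (norm_nonneg _))

lemma memLp_two [MeasurableSpace E] [BorelSpace E] {μ : Measure E} [IsFiniteMeasure μ]
    (hf : BoundedC1 f) : MemLp f 2 μ := by
  obtain ⟨C, hC⟩ := hf.exists_norm_le
  exact .of_bound hf.contDiff.continuous.aestronglyMeasurable C (ae_of_all _ hC)

lemma memLp_two_fderiv_comp_apply {X : Type*} [TopologicalSpace X] [MeasurableSpace X]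
    [BorelSpace X] {μ : Measure X} [IsFiniteMeasure μ] (hf : BoundedC1 f) {g : X → E}
    (hg : Continuous g) (v : E) : MemLp (fun x ↦ fderiv ℝ f (g x) v) 2 μ := by
  obtain ⟨C, hC⟩ := hf.exists_norm_fderiv_le
  have := hf.continuous_fderiv
  exact .of_bound (by fun_prop : Continuous _).aestronglyMeasurable (C * ‖v‖) <|
    ae_of_all _ fun x ↦ ((fderiv ℝ f (g x)).le_opNorm v).trans
      (mul_le_mul_of_nonneg_right (hC _) (norm_nonneg v))

section Marginal

variable {f : E × F → ℝ}

lemma slice_left (hf : BoundedC1 f) (y : F) : BoundedC1 fun x ↦ f (x, y) := by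
  simpa using hf.comp_add_clm (0, y) (.inl ℝ E F)

lemma slice_right (hf : BoundedC1 f) (x : E) : BoundedC1 fun y ↦ f (x, y) := by
  simpa using hf.comp_add_clm (x, 0) (.inr ℝ E F)

lemma fderiv_slice_left (hf : BoundedC1 f) (x : E) (y : F) :
    fderiv ℝ (fun x ↦ f (x, y)) x = (fderiv ℝ f (x, y)).comp (.inl ℝ E F) := by
  simpa using hf.fderiv_comp_add_clm (0, y) (.inl ℝ E F) x

lemma fderiv_slice_right (hf : BoundedC1 f) (x : E) (y : F) :
    fderiv ℝ (fun y ↦ f (x, y)) y = (fderiv ℝ f (x, y)).comp (.inr ℝ E F) := by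
  simpa using hf.fderiv_comp_add_clm (x, 0) (.inr ℝ E F) y

lemma exists_norm_fderiv_comp_inr_le (hf : BoundedC1 f) :
    ∃ C, ∀ p, ‖(fderiv ℝ f p).comp (.inr ℝ E F)‖ ≤ C := by
  obtain ⟨C, hC⟩ := hf.exists_norm_fderiv_le
  refine ⟨C * ‖ContinuousLinearMap.inr ℝ E F‖, fun p ↦ ?_⟩
  exact (ContinuousLinearMap.opNorm_comp_le _ _).trans
    (mul_le_mul_of_nonneg_right (hC p) (norm_nonneg _))

variable [MeasurableSpace E] [BorelSpace E] [SecondCountableTopology E] {μ : Measure E}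
  [IsFiniteMeasure μ]

lemma integrable_fderiv_comp_inr (hf : BoundedC1 f) (y : F) :
    Integrable (fun x ↦ (fderiv ℝ f (x, y)).comp (.inr ℝ E F)) μ := by
  obtain ⟨C, hC⟩ := hf.exists_norm_fderiv_comp_inr_le
  have := hf.continuous_fderiv
  exact .of_bound (by fun_prop : Continuous _).aestronglyMeasurable C (ae_of_all _ fun x ↦ hC _)

lemma hasFDerivAt_integral_left (hf : BoundedC1 f) (y : F) :
    HasFDerivAt (fun y ↦ ∫ x, f (x, y) ∂μ)
      (∫ x, (fderiv ℝ f (x, y)).comp (.inr ℝ E F) ∂μ) y := by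
  obtain ⟨C, hC⟩ := hf.exists_norm_fderiv_comp_inr_le
  refine hasFDerivAt_integral_of_dominated_of_fderiv_le (bound := fun _ ↦ C) univ_mem
    (.of_forall fun y ↦ (hf.slice_left y).contDiff.continuous.aestronglyMeasurable)
    ((hf.slice_left y).memLp_two.integrable one_le_two)
    (hf.integrable_fderiv_comp_inr y).aestronglyMeasurable
    (ae_of_all _ fun x z _ ↦ hC _) (integrable_const _) (ae_of_all _ fun x z _ ↦ ?_)
  rw [← hf.fderiv_slice_right]
  exact ((hf.slice_right x).differentiable z).hasFDerivAt

lemma integral_left (hf : BoundedC1 f) : BoundedC1 fun y ↦ ∫ x, f (x, y) ∂μ := by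
  have hfderiv := funext fun y ↦ (hf.hasFDerivAt_integral_left (μ := μ) y).fderiv
  have hcont := hf.continuous_fderiv
  obtain ⟨C, hC⟩ := hf.exists_norm_le
  obtain ⟨C', hC'⟩ := hf.exists_norm_fderiv_comp_inr_le
  refine ⟨contDiff_one_iff_fderiv.2
    ⟨fun y ↦ (hf.hasFDerivAt_integral_left y).differentiableAt, ?_⟩,
    ⟨C * μ.real Set.univ, fun y ↦ norm_integral_le_of_norm_le_const (ae_of_all _ fun x ↦ hC _)⟩,
    ⟨C' * μ.real Set.univ, fun y ↦ ?_⟩⟩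
  · rw [hfderiv]
    exact continuous_of_dominated (bound := fun _ ↦ C')
      (fun y ↦ (hf.integrable_fderiv_comp_inr y).aestronglyMeasurable)
      (fun y ↦ ae_of_all _ fun x ↦ hC' _) (integrable_const _)
      (ae_of_all _ fun x ↦ by fun_prop)
  · rw [hfderiv]
    exact norm_integral_le_of_norm_le_const (ae_of_all _ fun x ↦ hC' _)

lemma fderiv_integral_left_apply (hf : BoundedC1 f) (y v : F) :
    fderiv ℝ (fun y ↦ ∫ x, f (x, y) ∂μ) y v = ∫ x, fderiv ℝ f (x, y) (0, v) ∂μ := by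
  rw [(hf.hasFDerivAt_integral_left y).fderiv,
    ContinuousLinearMap.integral_apply (hf.integrable_fderiv_comp_inr y)]
  simp

end Marginal

end BoundedC1

lemma sq_integral_le_integral_sq {Ω : Type*} [MeasurableSpace Ω] {μ : Measure Ω}
    [IsProbabilityMeasure μ] {X : Ω → ℝ} (hX : MemLp X 2 μ) :
    (∫ ω, X ω ∂μ) ^ 2 ≤ ∫ ω, X ω ^ 2 ∂μ :=
  sub_nonneg.1 ((variance_nonneg X μ).trans_eq (variance_eq_sub hX))

lemma variance_prod_eq {Ω Ω' : Type*} [MeasurableSpace Ω] [MeasurableSpace Ω'] {μ : Measure Ω}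
    {ν : Measure Ω'} [IsProbabilityMeasure μ] [IsProbabilityMeasure ν] {X : Ω × Ω' → ℝ}
    (hX : MemLp X 2 (μ.prod ν)) (hslice : ∀ y, MemLp (fun x ↦ X (x, y)) 2 μ)
    (hmean : MemLp (fun y ↦ ∫ x, X (x, y) ∂μ) 2 ν) :
    Var[X; μ.prod ν] =
      ∫ y, Var[fun x ↦ X (x, y); μ] ∂ν + Var[fun y ↦ ∫ x, X (x, y) ∂μ; ν] := by
  have hvar (y : Ω') := variance_eq_sub (hslice y)
  simp only [hvar, variance_eq_sub hX, variance_eq_sub hmean, Pi.pow_apply]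
  rw [integral_sub hX.integrable_sq.integral_prod_right hmean.integrable_sq,
    integral_prod_symm _ (hX.integrable one_le_two), integral_prod_symm _ hX.integrable_sq]
  ring

namespace PoincareAlong

variable [MeasurableSpace E] [MeasurableSpace F] [Fintype ι] [Fintype κ] {μ : Measure E}
  {ν : Measure F} {e : ι → E} {e' : κ → F}

lemma reindex (h : PoincareAlong μ e) (σ : κ ≃ ι) : PoincareAlong μ (e ∘ σ) := fun f hf ↦
  (h f hf).trans_eq (σ.sum_comp fun i ↦ ∫ x, fderiv ℝ f x (e i) ^ 2 ∂μ).symm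

variable [BorelSpace E] [BorelSpace F]

lemma map (h : PoincareAlong μ e) (L : E →L[ℝ] F) : PoincareAlong (μ.map L) (L ∘ e) := by
  intro f hf
  have hL : AEMeasurable L μ := L.continuous.aemeasurable
  have hfL := h _ (by simpa using hf.comp_add_clm 0 L)
  have hcont := hf.continuous_fderiv
  rw [variance_map hf.contDiff.continuous.aemeasurable hL]
  refine hfL.trans_eq (Finset.sum_congr rfl fun i _ ↦ ?_)
  have hderiv (x : E) : fderiv ℝ (fun x ↦ f (L x)) x = (fderiv ℝ f (L x)).comp L := by
    simpa using hf.fderiv_comp_add_clm 0 L x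
  rw [integral_map hL (by fun_prop : Continuous _).aestronglyMeasurable]
  simp [hderiv]

theorem prod [SecondCountableTopology E] [SecondCountableTopology F] [IsProbabilityMeasure μ]
    [IsProbabilityMeasure ν] (hμ : PoincareAlong μ e) (hν : PoincareAlong ν e') :
    PoincareAlong (μ.prod ν)
      (Sum.elim (fun i ↦ ((e i, 0) : E × F)) fun j ↦ ((0, e' j) : E × F)) := by
  intro f hf
  have hint (v : E × F) : Integrable (fun p ↦ fderiv ℝ f p v ^ 2) (μ.prod ν) :=
    (hf.memLp_two_fderiv_comp_apply continuous_id v).integrable_sq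
  have hmean : BoundedC1 fun y ↦ ∫ x, f (x, y) ∂μ := hf.integral_left
  have hslice (y : F) (i : ι) :
      ∫ x, fderiv ℝ (fun x ↦ f (x, y)) x (e i) ^ 2 ∂μ = ∫ x, fderiv ℝ f (x, y) (e i, 0) ^ 2 ∂μ := by
    simp [hf.fderiv_slice_left]
  have hleft : ∫ y, Var[fun x ↦ f (x, y); μ] ∂ν ≤
      ∑ i, ∫ p, fderiv ℝ f p (e i, 0) ^ 2 ∂μ.prod ν := by
    simp only [integral_prod_symm _ (hint _)]
    rw [← integral_finsetSum _ fun i _ ↦ (hint _).integral_prod_right]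
    refine integral_mono_of_nonneg (ae_of_all _ fun y ↦ variance_nonneg _ _)
      (integrable_finsetSum _ fun i _ ↦ (hint _).integral_prod_right) (ae_of_all _ fun y ↦ ?_)
    simpa only [hslice] using hμ _ (hf.slice_left y)
  have hright : Var[fun y ↦ ∫ x, f (x, y) ∂μ; ν] ≤
      ∑ j, ∫ p, fderiv ℝ f p (0, e' j) ^ 2 ∂μ.prod ν := by
    refine (hν _ hmean).trans (Finset.sum_le_sum fun j _ ↦ ?_)
    rw [integral_prod_symm _ (hint _)]
    refine integral_mono (hmean.memLp_two_fderiv_comp_apply continuous_id _).integrable_sq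
      (hint _).integral_prod_right fun y ↦ ?_
    simp only [hf.fderiv_integral_left_apply]
    exact sq_integral_le_integral_sq (hf.memLp_two_fderiv_comp_apply (by fun_prop) _)
  rw [variance_prod_eq hf.memLp_two (fun y ↦ (hf.slice_left y).memLp_two) hmean.memLp_two,
    Fintype.sum_sum_type]
  exact add_le_add hleft hright

end PoincareAlong

lemma poincareAlong_gaussianReal : PoincareAlong (gaussianReal 0 1) fun _ : Unit ↦ (1 : ℝ) := by
  intro f hf
  obtain ⟨C, hC⟩ := hf.exists_norm_le
  obtain ⟨C', hC'⟩ := hf.exists_norm_fderiv_le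
  simpa using variance_gaussianReal_le hf.contDiff hC fun x ↦ by
    simpa [← norm_deriv_eq_norm_fderiv] using hC' x

lemma poincareAlong_pi_gaussianReal (n : ℕ) :
    PoincareAlong (Measure.pi fun _ : Fin n ↦ gaussianReal 0 1) fun i ↦ Pi.single i (1 : ℝ) := by
  induction n with
  | zero =>
    intro f _
    simp [Measure.pi_of_empty (fun _ : Fin 0 ↦ gaussianReal 0 1) 0]
  | succ n ih =>
    let L := (Fin.consEquivL ℝ fun _ : Fin (n + 1) ↦ ℝ : ℝ × (Fin n → ℝ) →L[ℝ] Fin (n + 1) → ℝ)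
    have hL : ((gaussianReal 0 1).prod (Measure.pi fun _ : Fin n ↦ gaussianReal 0 1)).map L
        = Measure.pi fun _ ↦ gaussianReal 0 1 := by
      have hfun : ⇑L = (MeasurableEquiv.piFinSuccAbove (fun _ : Fin (n + 1) ↦ ℝ) 0).symm := by
        ext p i
        simp [L, MeasurableEquiv.piFinSuccAbove, Fin.insertNthEquiv]
      rw [hfun]
      exact (measurePreserving_piFinSuccAbove (fun _ ↦ gaussianReal 0 1) 0).symm.map_eq
    let σ : Fin (n + 1) ≃ Unit ⊕ Fin n :=
      (finSuccEquiv n).trans ((Equiv.optionEquivSumPUnit _).trans (Equiv.sumComm _ _))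
    have hprod := ((poincareAlong_gaussianReal.prod ih).map L).reindex σ
    rw [hL] at hprod
    convert hprod using 1
    ext i j
    refine Fin.cases ?_ (fun i ↦ ?_) i <;> refine Fin.cases ?_ (fun j ↦ ?_) j <;>
      simp [L, σ, Pi.single_apply]

theorem variance_stdGaussian_le {V : Type*} [NormedAddCommGroup V] [InnerProductSpace ℝ V]
    [FiniteDimensional ℝ V] [MeasurableSpace V] [BorelSpace V] {f : V → ℝ} (hf : BoundedC1 f) :
    Var[f; stdGaussian V] ≤ ∫ x, ‖fderiv ℝ f x‖ ^ 2 ∂stdGaussian V := by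
  let b := stdOrthonormalBasis ℝ V
  let L : (Fin (Module.finrank ℝ V) → ℝ) →L[ℝ] V :=
    ∑ i, (ContinuousLinearMap.proj i : (Fin _ → ℝ) →L[ℝ] ℝ).smulRight (b i)
  have hL : (Measure.pi fun _ ↦ gaussianReal 0 1).map L = stdGaussian V := by
    rw [stdGaussian_eq_map_pi_orthonormalBasis b]
    congr with x
    simp [L]
  have hLb : L ∘ (fun i ↦ Pi.single i 1) = b := by
    ext i
    simp [L, Pi.single_apply]
  have hvar := (poincareAlong_pi_gaussianReal (Module.finrank ℝ V)).map L f hf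
  rw [hL, hLb] at hvar
  refine hvar.trans_eq ?_
  simp only [b.norm_dual]
  exact (integral_finsetSum _ fun i _ ↦
    (hf.memLp_two_fderiv_comp_apply continuous_id (b i)).integrable_sq).symm

end Poincare

section GaussianDensity

variable {V : Type*} [NormedAddCommGroup V] [InnerProductSpace ℝ V] [FiniteDimensional ℝ V]
  [MeasurableSpace V] [BorelSpace V]

lemma integrable_exp_neg_mul_norm_sq {t : ℝ} (ht : 0 < t) :
    Integrable fun x : V ↦ Real.exp (-t * ‖x‖ ^ 2) := by
  have h := GaussianFourier.integrable_cexp_neg_mul_sq_norm_add (b := t) (by simpa) 0 (0 : V)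
  refine h.re.congr (ae_of_all _ fun x ↦ ?_)
  simp only [inner_zero_left, Complex.ofReal_zero, mul_zero, add_zero]
  norm_cast

variable (V) in
theorem stdGaussian_eq_withDensity :
    stdGaussian V = volume.withDensity fun x ↦ ENNReal.ofReal
      (((2 * Real.pi) ^ (Module.finrank ℝ V / 2 : ℝ))⁻¹ * Real.exp (-2⁻¹ * ‖x‖ ^ 2)) := by
  set c : ℝ := ((2 * Real.pi) ^ (Module.finrank ℝ V / 2 : ℝ))⁻¹ with hc
  have hint : Integrable fun x : V ↦ c * Real.exp (-2⁻¹ * ‖x‖ ^ 2) :=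
    (integrable_exp_neg_mul_norm_sq (by norm_num)).const_mul c
  have := isFiniteMeasure_withDensity_ofReal hint.2
  refine Measure.ext_of_charFun (funext fun y ↦ ?_)
  rw [charFun_stdGaussian, charFun_apply, integral_withDensity_eq_integral_toReal_smul₀
    hint.aemeasurable.ennreal_ofReal (ae_of_all _ fun _ ↦ ENNReal.ofReal_lt_top)]
  have hfourier := GaussianFourier.integral_cexp_neg_mul_sq_norm_add (b := 2⁻¹)
    (by norm_num) Complex.I y
  have hmass : (c : ℂ) * (Real.pi / 2⁻¹ : ℂ) ^ (Module.finrank ℝ V / 2 : ℂ) = 1 := by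
    have hpow : (0 : ℝ) < (2 * Real.pi) ^ (Module.finrank ℝ V / 2 : ℝ) := by positivity
    rw [show (Real.pi / 2⁻¹ : ℂ) = (2 * Real.pi : ℝ) by push_cast; ring, hc]
    have hcpow := Complex.ofReal_cpow (by positivity : 0 ≤ 2 * Real.pi)
      (Module.finrank ℝ V / 2 : ℝ)
    push_cast at hcpow ⊢
    rw [← hcpow]
    exact inv_mul_cancel₀ (by exact_mod_cast hpow.ne')
  calc Complex.exp (-‖y‖ ^ 2 / 2)
      = c * ∫ x : V, Complex.exp (-2⁻¹ * ‖x‖ ^ 2 + Complex.I * inner ℝ y x) := by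
        rw [hfourier, ← mul_assoc, hmass, one_mul, Complex.I_sq]
        congr 1
        ring
    _ = _ := by
        rw [← integral_const_mul]
        congr with x
        rw [ENNReal.toReal_ofReal (by positivity), Complex.real_smul, Complex.exp_add,
          real_inner_comm]
        push_cast
        ring_nf

lemma exists_integral_stdGaussian_comp_smul {t : ℝ} (ht : 0 < t) :
    ∃ c > 0, ∀ g : V → ℝ, ∫ x, g ((√(2 * t))⁻¹ • x) ∂stdGaussian V =
      c * ∫ x, g x * Real.exp (-t * ‖x‖ ^ 2) := by
  refine ⟨((2 * Real.pi) ^ (Module.finrank ℝ V / 2 : ℝ))⁻¹ * √(2 * t) ^ Module.finrank ℝ V,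
    by positivity, fun g ↦ ?_⟩
  have hsq : √(2 * t) ^ 2 = 2 * t := Real.sq_sqrt (by positivity)
  have hscale := Measure.integral_comp_smul volume
    (fun x : V ↦ g x * Real.exp (-t * ‖x‖ ^ 2)) (√(2 * t))⁻¹
  rw [inv_pow, inv_inv, abs_of_nonneg (by positivity), smul_eq_mul] at hscale
  rw [stdGaussian_eq_withDensity, integral_withDensity_eq_integral_toReal_smul (by fun_prop)
    (ae_of_all _ fun _ ↦ ENNReal.ofReal_lt_top), mul_assoc, ← hscale, ← integral_const_mul]
  congr with x
  rw [ENNReal.toReal_ofReal (by positivity), smul_eq_mul, norm_smul, mul_pow, norm_inv, inv_pow,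
    Real.norm_of_nonneg (by positivity), hsq]
  field_simp

theorem two_mul_integral_sq_mul_exp_le {f : V → ℝ} (hf : BoundedC1 f) {t : ℝ} (ht : 0 < t)
    (hmean : ∫ x, f x * Real.exp (-t * ‖x‖ ^ 2) = 0) :
    2 * t * ∫ x, f x ^ 2 * Real.exp (-t * ‖x‖ ^ 2) ≤
      ∫ x, ‖fderiv ℝ f x‖ ^ 2 * Real.exp (-t * ‖x‖ ^ 2) := by
  obtain ⟨c, hc, hgauss⟩ := exists_integral_stdGaussian_comp_smul (V := V) ht
  set L : V →L[ℝ] V := (√(2 * t))⁻¹ • .id ℝ V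
  have hfL : BoundedC1 fun x ↦ f ((√(2 * t))⁻¹ • x) := by simpa [L] using hf.comp_add_clm 0 L
  have hnorm (x : V) : ‖fderiv ℝ (fun x ↦ f ((√(2 * t))⁻¹ • x)) x‖ ^ 2
      = (2 * t)⁻¹ * ‖fderiv ℝ f ((√(2 * t))⁻¹ • x)‖ ^ 2 := by
    have hderiv := hf.fderiv_comp_add_clm 0 L x
    simp only [L, zero_add, smul_apply, ContinuousLinearMap.id_apply,
      ContinuousLinearMap.comp_smul, ContinuousLinearMap.comp_id] at hderiv
    rw [hderiv, norm_smul, mul_pow, norm_inv, inv_pow, Real.norm_of_nonneg (by positivity),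
      Real.sq_sqrt (by positivity)]
  have hvar := variance_stdGaussian_le hfL
  rw [variance_eq_sub hfL.memLp_two, hgauss f, hmean] at hvar
  simp only [hnorm, integral_const_mul, Pi.pow_apply] at hvar
  rw [hgauss (fun x ↦ f x ^ 2), hgauss (fun x ↦ ‖fderiv ℝ f x‖ ^ 2), mul_zero, zero_pow two_ne_zero,
    sub_zero, inv_mul_eq_div, le_div_iff₀ (by positivity), mul_assoc,
    mul_le_mul_iff_right₀ hc] at hvar
  linarith

end GaussianDensity

section Polar

variable {E : Type*} [NormedAddCommGroup E] [NormedSpace ℝ E] [FiniteDimensional ℝ E]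
  [MeasurableSpace E] [BorelSpace E] (μ : Measure E) [μ.IsAddHaarMeasure]

lemma integral_fun_norm_mul_eq_zero [Nontrivial E] {u : E → ℝ}
    (hu : ∀ r : ℝ, 0 < r → ∫ ω : sphere (0 : E) 1, u (r • (ω : E)) ∂μ.toSphere = 0) (φ : ℝ → ℝ) :
    ∫ x, φ ‖x‖ * u x ∂μ = 0 := by
  set g : sphere (0 : E) 1 × Set.Ioi (0 : ℝ) → ℝ := fun p ↦ φ p.2 * u ((p.2 : ℝ) • (p.1 : E))
  have hpolar (x : ({0}ᶜ : Set E)) :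
      g (homeomorphUnitSphereProd E x) = φ ‖(x : E)‖ * u x := by
    simp [g, smul_smul, norm_ne_zero_iff.2 x.2]
  calc ∫ x, φ ‖x‖ * u x ∂μ
      = ∫ x : ({0}ᶜ : Set E), φ ‖(x : E)‖ * u x ∂μ.comap (↑) := by
        rw [integral_subtype_comap (measurableSet_singleton _).compl fun x : E ↦ φ ‖x‖ * u x,
          restrict_compl_singleton]
    _ = ∫ p, g p ∂μ.toSphere.prod (Measure.volumeIoiPow (Module.finrank ℝ E - 1)) := by
        simp only [← hpolar]
        exact μ.measurePreserving_homeomorphUnitSphereProd.integral_comp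
          (Homeomorph.measurableEmbedding _) g
    _ = 0 := by
        by_cases hg : Integrable g
            (μ.toSphere.prod (Measure.volumeIoiPow (Module.finrank ℝ E - 1)))
        · rw [integral_prod_symm _ hg]
          refine integral_eq_zero_of_ae (ae_of_all _ fun r ↦ ?_)
          simp only [g, integral_const_mul, hu r r.2, mul_zero, Pi.zero_apply]
        · exact integral_undef hg

open scoped Pointwise in
lemma measurePreserving_neg_toSphere :
    MeasurePreserving (fun ω : sphere (0 : E) 1 ↦ -ω) μ.toSphere μ.toSphere := by
  have hmeas : Measurable fun ω : sphere (0 : E) 1 ↦ -ω := continuous_neg.measurable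
  refine ⟨hmeas, Measure.ext fun s hs ↦ ?_⟩
  have himage : ((↑) : sphere (0 : E) 1 → E) '' (Neg.neg ⁻¹' s) = -((↑) '' s) := by
    ext x
    constructor
    · rintro ⟨ω, hω, rfl⟩
      exact ⟨-ω, hω, rfl⟩
    · rintro ⟨ω, hω, hx⟩
      exact ⟨-ω, by simpa using hω, by simp [hx]⟩
  rw [Measure.map_apply hmeas hs, Measure.toSphere_apply' _ (hmeas hs),
    Measure.toSphere_apply' _ hs, himage, Set.smul_neg, Measure.measure_neg]

end Polar

section SphereAvg

variable {N : ℕ} {u : EuclideanSpace ℝ (Fin N) → ℝ}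

lemma SphereAvgZero.of_odd (hu : ∀ x, u (-x) = -u x) : SphereAvgZero u := by
  intro r _
  have h := (measurePreserving_neg_toSphere volume).integral_comp
    (Homeomorph.neg _).measurableEmbedding
    fun ω : sphere (0 : EuclideanSpace ℝ (Fin N)) 1 ↦ u (r • (ω : EuclideanSpace ℝ (Fin N)))
  simp only [coe_neg_sphere, smul_neg, hu, integral_neg] at h
  linarith

lemma SphereAvgZero.apply_zero [Nontrivial (EuclideanSpace ℝ (Fin N))] (hu : SphereAvgZero u) :
    u 0 = 0 := by
  have h := hu 0 le_rfl
  simp only [zero_smul, integral_const, smul_eq_mul] at h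
  refine (mul_eq_zero.1 h).resolve_left ?_
  rw [← ne_eq, measureReal_ne_zero_iff, Measure.measure_univ_ne_zero]
  exact Measure.toSphere_ne_zero volume

end SphereAvg

lemma integrable_of_norm_le_of_hasCompactSupport {X F : Type*} [TopologicalSpace X]
    [MeasurableSpace X] {μ : Measure X} [IsFiniteMeasureOnCompacts μ]
    [NormedAddCommGroup F] {f : X → F} (hf : AEStronglyMeasurable f μ) (hsupp : HasCompactSupport f)
    {C : ℝ} (hC : ∀ x, ‖f x‖ ≤ C) : Integrable f μ :=
  (integrableOn_iff_integrable_of_support_subset (subset_tsupport f)).1 <|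
    Measure.integrableOn_of_bounded hsupp.isCompact.measure_lt_top.ne hf (ae_of_all _ hC)

section Dilation

variable {E : Type*} [NormedAddCommGroup E] [NormedSpace ℝ E] {u : E → ℝ}

lemma BoundedC1.of_hasCompactSupport (hu : ContDiff ℝ 1 u) (hsupp : HasCompactSupport u) :
    BoundedC1 u where
  contDiff := hu
  exists_norm_le := hsupp.exists_bound_of_continuous hu.continuous
  exists_norm_fderiv_le :=
    (hsupp.fderiv ℝ).exists_bound_of_continuous (hu.continuous_fderiv one_ne_zero)

lemma BoundedC1.exists_bound_of_apply_zero (hu : BoundedC1 u) (h0 : u 0 = 0) :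
    ∃ K, (∀ x, |u x| ≤ K * ‖x‖) ∧ ∀ x, ‖fderiv ℝ u x‖ ≤ K := by
  obtain ⟨K, hK⟩ := hu.exists_norm_fderiv_le
  refine ⟨K, fun x ↦ ?_, hK⟩
  simpa [h0] using convex_univ.norm_image_sub_le_of_norm_fderiv_le
    (fun y _ ↦ hu.differentiable y) (fun y _ ↦ hK y) (Set.mem_univ 0) (Set.mem_univ x)

lemma abs_mul_fderiv_self_div_norm_sq_le {K : ℝ} (hu : ∀ x, |u x| ≤ K * ‖x‖)
    (hfderiv : ∀ x, ‖fderiv ℝ u x‖ ≤ K) (x y : E) :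
    |u y * fderiv ℝ u y x / ‖x‖ ^ 2| ≤ K ^ 2 * (‖y‖ / ‖x‖) := by
  have hle := (fderiv ℝ u y).le_of_opNorm_le (hfderiv y) x
  rcases eq_or_ne x 0 with rfl | hx
  · simp
  rw [abs_div, abs_mul, abs_of_pos (by positivity : 0 < ‖x‖ ^ 2), div_le_iff₀ (by positivity)]
  calc |u y| * |fderiv ℝ u y x| ≤ (K * ‖y‖) * (K * ‖x‖) :=
        mul_le_mul (hu y) hle (abs_nonneg _) ((abs_nonneg _).trans (hu y))
    _ = K ^ 2 * (‖y‖ / ‖x‖) * ‖x‖ ^ 2 := by field_simp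

lemma hasDerivAt_sq_comp_smul_div_norm_sq (hu : Differentiable ℝ u) (x : E) (s : ℝ) :
    HasDerivAt (fun s : ℝ ↦ u (s • x) ^ 2 / ‖x‖ ^ 2)
      (2 * (u (s • x) * fderiv ℝ u (s • x) x / ‖x‖ ^ 2)) s := by
  have hline : HasDerivAt (fun s : ℝ ↦ s • x) x s := by
    simpa using (hasDerivAt_id s).smul_const x
  convert! (((hu _).hasFDerivAt.comp_hasDerivAt s hline).pow 2).div_const (‖x‖ ^ 2) using 1
  simp only [Function.comp_apply]
  ring

lemma norm_two_mul_fderiv_comp_smul_div_norm_sq_le {K R : ℝ} (hu : ∀ x, |u x| ≤ K * ‖x‖)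
    (hfderiv : ∀ x, ‖fderiv ℝ u x‖ ≤ K) (hR : tsupport u ⊆ closedBall 0 R) (x : E) {s : ℝ}
    (hs : s ∈ ball (1 : ℝ) (1 / 2)) :
    ‖2 * (u (s • x) * fderiv ℝ u (s • x) x / ‖x‖ ^ 2)‖ ≤
      (closedBall (0 : E) (2 * R)).indicator (fun _ ↦ 4 * K ^ 2) x := by
  have hs' := abs_lt.1 (Real.dist_eq s 1 ▸ mem_ball.1 hs)
  have hsx : ‖s • x‖ = s * ‖x‖ := by rw [norm_smul, Real.norm_of_nonneg (by linarith)]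
  by_cases hx : x ∈ closedBall (0 : E) (2 * R)
  · rw [Set.indicator_of_mem hx, norm_mul, Real.norm_ofNat, Real.norm_eq_abs]
    have hratio : ‖s • x‖ / ‖x‖ ≤ 2 := by
      rw [hsx, mul_div_assoc]
      exact (mul_le_of_le_one_right (by linarith) (div_self_le_one _)).trans (by linarith)
    have := (abs_mul_fderiv_self_div_norm_sq_le hu hfderiv x (s • x)).trans
      (mul_le_mul_of_nonneg_left hratio (sq_nonneg K))
    linarith
  · have hzero : u (s • x) = 0 := image_eq_zero_of_notMem_tsupport fun h ↦ hx <| by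
      have := mem_closedBall_zero_iff.1 (hR h)
      rw [mem_closedBall_zero_iff]
      nlinarith [norm_nonneg x]
    simp [hzero, Set.indicator_of_notMem hx]

variable [MeasurableSpace E] [BorelSpace E] {μ : Measure E}

section IsFiniteMeasureOnCompacts

variable [IsFiniteMeasureOnCompacts μ]

lemma integrable_sq_div_norm_sq (hu : ContDiff ℝ 1 u) (hsupp : HasCompactSupport u)
    (h0 : u 0 = 0) : Integrable (fun x ↦ u x ^ 2 / ‖x‖ ^ 2) μ := by
  obtain ⟨K, hu_le, -⟩ :=
    (BoundedC1.of_hasCompactSupport hu hsupp).exists_bound_of_apply_zero h0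
  have hmeas := hu.continuous.measurable
  refine integrable_of_norm_le_of_hasCompactSupport (C := K ^ 2)
    (by fun_prop : Measurable _).aestronglyMeasurable
    ((hsupp.comp_left (g := (· ^ 2)) (by simp)).mul_right (f' := fun x ↦ (‖x‖ ^ 2)⁻¹)) fun x ↦ ?_
  rw [Real.norm_of_nonneg (by positivity)]
  refine div_le_of_le_mul₀ (by positivity) (by positivity) ?_
  rw [← mul_pow, ← sq_abs]
  gcongr
  exact hu_le x

lemma integrable_mul_fderiv_self_div_norm_sq (hu : ContDiff ℝ 1 u) (hsupp : HasCompactSupport u)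
    (h0 : u 0 = 0) : Integrable (fun x ↦ u x * fderiv ℝ u x x / ‖x‖ ^ 2) μ := by
  obtain ⟨K, hu_le, hfderiv⟩ :=
    (BoundedC1.of_hasCompactSupport hu hsupp).exists_bound_of_apply_zero h0
  have hmeas := hu.continuous.measurable
  have hmeas' : Measurable fun x ↦ fderiv ℝ u x x :=
    ((hu.continuous_fderiv one_ne_zero).clm_apply continuous_id).measurable
  refine integrable_of_norm_le_of_hasCompactSupport (C := K ^ 2)
    (by fun_prop : Measurable _).aestronglyMeasurable
    (hsupp.mul_right.mul_right (f' := fun x ↦ (‖x‖ ^ 2)⁻¹)) fun x ↦ ?_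
  exact (abs_mul_fderiv_self_div_norm_sq_le hu_le hfderiv x x).trans <|
    mul_le_of_le_one_right (by positivity) (div_self_le_one _)

end IsFiniteMeasureOnCompacts

variable [FiniteDimensional ℝ E] [μ.IsAddHaarMeasure]

lemma integral_sq_comp_smul_div_norm_sq (u : E → ℝ) {s : ℝ} (hs : 0 < s) :
    ∫ x, u (s • x) ^ 2 / ‖x‖ ^ 2 ∂μ =
      s ^ (2 - Module.finrank ℝ E : ℤ) * ∫ x, u x ^ 2 / ‖x‖ ^ 2 ∂μ := by
  have hhom (x : E) :
      u (s • x) ^ 2 / ‖x‖ ^ 2 = s ^ 2 * (u (s • x) ^ 2 / ‖s • x‖ ^ 2) := by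
    rw [norm_smul, Real.norm_of_nonneg hs.le]
    field_simp
  simp only [hhom, integral_const_mul]
  rw [Measure.integral_comp_smul μ fun x ↦ u x ^ 2 / ‖x‖ ^ 2, abs_of_nonneg (by positivity),
    smul_eq_mul, ← mul_assoc, zpow_sub₀ hs.ne']
  simp [div_eq_mul_inv, mul_assoc]

/-- The weight `‖x‖⁻²` gives this integral a power scaling law under the dilations of `u`, which is
differentiated at the dilation factor `1`. -/
theorem two_mul_integral_mul_fderiv_self_div_norm_sq (hu : ContDiff ℝ 1 u)
    (hsupp : HasCompactSupport u) (h0 : u 0 = 0) :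
    2 * ∫ x, u x * fderiv ℝ u x x / ‖x‖ ^ 2 ∂μ =
      (2 - Module.finrank ℝ E) * ∫ x, u x ^ 2 / ‖x‖ ^ 2 ∂μ := by
  obtain ⟨K, hu_le, hfderiv⟩ :=
    (BoundedC1.of_hasCompactSupport hu hsupp).exists_bound_of_apply_zero h0
  obtain ⟨R, hR⟩ := hsupp.isCompact.isBounded.subset_closedBall (0 : E)
  have hmeas := hu.continuous.measurable
  have hint := integrable_mul_fderiv_self_div_norm_sq (μ := μ) hu hsupp h0
  have hintegral := (hasDerivAt_integral_of_dominated_loc_of_deriv_le (μ := μ) (x₀ := (1 : ℝ))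
    (F := fun s x ↦ u (s • x) ^ 2 / ‖x‖ ^ 2) (ball_mem_nhds _ (by norm_num))
    (.of_forall fun s ↦ (by fun_prop : Measurable _).aestronglyMeasurable)
    (by simpa only [one_smul] using integrable_sq_div_norm_sq hu hsupp h0)
    (by simpa only [one_smul] using (hint.const_mul 2).aestronglyMeasurable)
    (ae_of_all _ fun x s ↦ norm_two_mul_fderiv_comp_smul_div_norm_sq_le hu_le hfderiv hR x)
    ((integrable_indicator_iff measurableSet_closedBall).2
      (integrableOn_const measure_closedBall_lt_top.ne))
    (ae_of_all _ fun x s _ ↦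
      hasDerivAt_sq_comp_smul_div_norm_sq (hu.differentiable one_ne_zero) x s)).2
  have hpow := (hasDerivAt_zpow (2 - Module.finrank ℝ E : ℤ) (1 : ℝ) (.inl one_ne_zero)).mul_const
    (∫ x, u x ^ 2 / ‖x‖ ^ 2 ∂μ)
  have heq := hintegral.unique <| hpow.congr_of_eventuallyEq <| by
    filter_upwards [lt_mem_nhds one_pos] with s hs using integral_sq_comp_smul_div_norm_sq u hs
  simpa [integral_const_mul] using heq

end Dilation

section LaplaceTransform

variable {X : Type*} [MeasurableSpace X] {μ : Measure X} {q g : X → ℝ} {a : ℝ}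

lemma integral_rpow_mul_exp_neg_mul_Ioi_eq_rpow_neg (ha : 0 < a) {r : ℝ} (hr : 0 < r) :
    ∫ t in Set.Ioi (0 : ℝ), t ^ (a - 1) * Real.exp (-(r * t)) = r ^ (-a) * Real.Gamma a := by
  rw [Real.integral_rpow_mul_exp_neg_mul_Ioi ha hr, one_div, Real.inv_rpow hr.le,
    Real.rpow_neg hr.le]

lemma integrableOn_rpow_mul_exp_neg_mul_Ioi (ha : 0 < a) {r : ℝ} (hr : 0 < r) :
    IntegrableOn (fun t : ℝ ↦ t ^ (a - 1) * Real.exp (-(r * t))) (Set.Ioi 0) := by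
  refine .of_integral_ne_zero ?_
  rw [integral_rpow_mul_exp_neg_mul_Ioi_eq_rpow_neg ha hr]
  have := Real.Gamma_pos_of_pos ha
  positivity

lemma integrable_prod_rpow_mul_exp (ha : 0 < a) (hq : Measurable q) (hq_pos : ∀ᵐ x ∂μ, 0 < q x)
    (hg : AEStronglyMeasurable g μ) (hint : Integrable (fun x ↦ q x ^ (-a) * g x) μ) :
    Integrable (fun p : X × ℝ ↦ g p.1 * (p.2 ^ (a - 1) * Real.exp (-(q p.1 * p.2))))
      (μ.prod (volume.restrict (Set.Ioi 0))) := by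
  have hmeas : AEStronglyMeasurable
      (fun p : X × ℝ ↦ g p.1 * (p.2 ^ (a - 1) * Real.exp (-(q p.1 * p.2))))
      (μ.prod (volume.restrict (Set.Ioi 0))) :=
    hg.comp_fst.mul (by fun_prop : Measurable _).aestronglyMeasurable
  rw [integrable_prod_iff hmeas]
  refine ⟨?_, ?_⟩
  · filter_upwards [hq_pos] with x hx using
      (integrableOn_rpow_mul_exp_neg_mul_Ioi ha hx).const_mul _
  · refine (hint.norm.const_mul (Real.Gamma a)).congr ?_
    filter_upwards [hq_pos] with x hx
    have hnorm : ∫ t in Set.Ioi (0 : ℝ), ‖g x * (t ^ (a - 1) * Real.exp (-(q x * t)))‖ =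
        ∫ t in Set.Ioi (0 : ℝ), ‖g x‖ * (t ^ (a - 1) * Real.exp (-(q x * t))) :=
      setIntegral_congr_fun measurableSet_Ioi fun t (ht : 0 < t) ↦ by
        simp only [norm_mul, Real.norm_of_nonneg (Real.rpow_nonneg ht.le _), Real.norm_eq_abs,
          Real.abs_exp]
    rw [hnorm, integral_const_mul, integral_rpow_mul_exp_neg_mul_Ioi_eq_rpow_neg ha hx, norm_mul,
      Real.norm_of_nonneg (Real.rpow_nonneg hx.le _)]
    ring

lemma integral_rpow_mul_integral_mul_exp [SFinite μ] (ha : 0 < a) (hq : Measurable q)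
    (hq_pos : ∀ᵐ x ∂μ, 0 < q x) (hg : AEStronglyMeasurable g μ)
    (hint : Integrable (fun x ↦ q x ^ (-a) * g x) μ) :
    IntegrableOn (fun t : ℝ ↦ t ^ (a - 1) * ∫ x, g x * Real.exp (-t * q x) ∂μ) (Set.Ioi 0) ∧
      ∫ t in Set.Ioi (0 : ℝ), t ^ (a - 1) * ∫ x, g x * Real.exp (-t * q x) ∂μ =
        Real.Gamma a * ∫ x, q x ^ (-a) * g x ∂μ := by
  have hprod := integrable_prod_rpow_mul_exp ha hq hq_pos hg hint
  have hinner (t : ℝ) : ∫ x, g x * (t ^ (a - 1) * Real.exp (-(q x * t))) ∂μ =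
      t ^ (a - 1) * ∫ x, g x * Real.exp (-t * q x) ∂μ := by
    rw [← integral_const_mul]
    congr with x
    rw [neg_mul, mul_comm t]
    ring
  refine ⟨by simpa only [IntegrableOn, hinner] using hprod.integral_prod_right, ?_⟩
  simp only [← hinner]
  rw [← integral_integral_swap hprod, ← integral_const_mul]
  refine integral_congr_ae ?_
  filter_upwards [hq_pos] with x hx
  rw [integral_const_mul, integral_rpow_mul_exp_neg_mul_Ioi_eq_rpow_neg ha hx]
  ring

lemma setIntegral_Ioi_lt_of_eventually_lt {f g : ℝ → ℝ} {a : ℝ} (hf : IntegrableOn f (Set.Ioi a))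
    (hg : IntegrableOn g (Set.Ioi a)) (hle : ∀ t, a < t → f t ≤ g t)
    (hlt : ∀ᶠ t in 𝓝[>] a, f t < g t) : ∫ t in Set.Ioi a, f t < ∫ t in Set.Ioi a, g t := by
  obtain ⟨b, hab, hb⟩ := mem_nhdsGT_iff_exists_Ioo_subset.1 hlt
  rw [← sub_pos, ← integral_sub hg hf,
    setIntegral_pos_iff_support_of_nonneg_ae
      ((ae_restrict_iff' measurableSet_Ioi).2 (ae_of_all _ fun t ht ↦ sub_nonneg.2 (hle t ht)))
      (hg.sub hf)]
  refine lt_of_lt_of_le ?_ (measure_mono fun t (ht : t ∈ Set.Ioo a b) ↦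
    ⟨(sub_pos.2 (hb ht)).ne', ht.1⟩)
  simpa using hab

end LaplaceTransform

section GroundState

lemma norm_sq_rpow_neg_mul_sq {E : Type*} [NormedAddCommGroup E] {u : E → ℝ} (h0 : u 0 = 0)
    (α : ℝ) (x : E) :
    (‖x‖ ^ 2) ^ (-(α + 1)) * (‖x‖ ^ α * u x) ^ 2 = u x ^ 2 / ‖x‖ ^ 2 := by
  rcases eq_or_ne x 0 with rfl | hx
  · simp [h0]
  · rw [Real.rpow_neg (by positivity), Real.rpow_add_one (by positivity),
      ← Real.rpow_pow_comm (norm_nonneg x)]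
    field_simp

variable {V : Type*} [NormedAddCommGroup V] [InnerProductSpace ℝ V] {u : V → ℝ} {α : ℝ}

lemma norm_smul_add_smul_innerSL_sq [CompleteSpace V] (φ : V →L[ℝ] ℝ) (x : V) (a b : ℝ) :
    ‖a • φ + b • innerSL ℝ x‖ ^ 2 = a ^ 2 * ‖φ‖ ^ 2 + 2 * a * b * φ x + b ^ 2 * ‖x‖ ^ 2 := by
  obtain ⟨y, rfl⟩ := (InnerProductSpace.toDual ℝ V).surjective φ
  have hsum : a • InnerProductSpace.toDual ℝ V y + b • innerSL ℝ x =
      InnerProductSpace.toDual ℝ V (a • y + b • x) := by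
    ext z
    simp
  rw [hsum, LinearIsometryEquiv.norm_map, LinearIsometryEquiv.norm_map, norm_add_sq_real,
    norm_smul, norm_smul, mul_pow, mul_pow, Real.norm_eq_abs, Real.norm_eq_abs, sq_abs, sq_abs,
    inner_smul_left, inner_smul_right, InnerProductSpace.toDual_apply_apply]
  simp only [conj_trivial]
  ring

lemma rpow_sub_two {r : ℝ} (hr : 0 < r) (α : ℝ) : r ^ (α - 2) = r ^ α / r ^ 2 :=
  mod_cast Real.rpow_sub_natCast hr.ne' α 2

lemma hasFDerivAt_norm_rpow_of_ne_zero {x : V} (hx : x ≠ 0) (α : ℝ) :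
    HasFDerivAt (fun x : V ↦ ‖x‖ ^ α) ((α * ‖x‖ ^ (α - 2)) • innerSL ℝ x) x := by
  have hrpow (y : V) (p : ℝ) : (‖y‖ ^ 2) ^ p = ‖y‖ ^ (2 * p) := by
    simpa using (Real.rpow_natCast_mul (norm_nonneg y) 2 p).symm
  convert! (hasStrictFDerivAt_norm_sq x).hasFDerivAt.rpow_const (p := α / 2)
    (.inl (by positivity)) using 1
  · ext y
    rw [hrpow, mul_div_cancel₀ _ two_ne_zero]
  · ext y
    simp only [hrpow, smul_apply, smul_eq_mul, innerSL_apply_apply, nsmul_eq_mul]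
    rw [show 2 * (α / 2 - 1) = α - 2 by ring]
    push_cast
    ring

lemma hasFDerivAt_norm_rpow_mul (hu : Differentiable ℝ u) (h0 : u 0 = 0) (hα : 0 < α) (x : V) :
    HasFDerivAt (fun x ↦ ‖x‖ ^ α * u x)
      (‖x‖ ^ α • fderiv ℝ u x + (α * ‖x‖ ^ (α - 2) * u x) • innerSL ℝ x) x := by
  rcases eq_or_ne x 0 with rfl | hx
  · simpa [h0] using hasFDerivAt_smul_of_eq_zero (hu 0).hasFDerivAt h0
      (continuous_norm.rpow_const fun _ ↦ .inr hα.le).continuousAt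
  · convert! (hasFDerivAt_norm_rpow_of_ne_zero hx α).mul (hu x).hasFDerivAt using 1
    rw [smul_smul, mul_comm (u x)]

lemma BoundedC1.continuous_fderiv_norm_rpow_mul (hu : BoundedC1 u) (h0 : u 0 = 0) (hα : 0 < α) :
    Continuous fun x ↦ ‖x‖ ^ α • fderiv ℝ u x + (α * ‖x‖ ^ (α - 2) * u x) • innerSL ℝ x := by
  have hnorm : Continuous fun x : V ↦ ‖x‖ ^ α := continuous_norm.rpow_const fun _ ↦ .inr hα.le
  obtain ⟨K, hu_le, -⟩ := hu.exists_bound_of_apply_zero h0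
  refine (hnorm.smul hu.continuous_fderiv).add (continuous_iff_continuousAt.2 fun x ↦ ?_)
  rcases eq_or_ne x 0 with rfl | hx
  · have hlim : Tendsto (fun x : V ↦ α * K * ‖x‖ ^ α) (𝓝 0) (𝓝 0) := by
      simpa [Real.zero_rpow hα.ne'] using (hnorm.const_mul (α * K)).tendsto 0
    rw [ContinuousAt, h0, mul_zero, zero_smul]
    refine squeeze_zero_norm (fun x ↦ ?_) hlim
    rcases eq_or_ne x 0 with rfl | hx
    · simp [Real.zero_rpow hα.ne']
    have hx' : 0 < ‖x‖ := norm_pos_iff.2 hx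
    rw [norm_smul, innerSL_apply_norm, norm_mul, Real.norm_of_nonneg (by positivity),
      Real.norm_eq_abs]
    calc α * ‖x‖ ^ (α - 2) * |u x| * ‖x‖ ≤ α * ‖x‖ ^ (α - 2) * (K * ‖x‖) * ‖x‖ := by
          gcongr
          exact hu_le x
      _ = α * K * ‖x‖ ^ α := by
          rw [rpow_sub_two hx']
          field_simp
  · have hx' : ‖x‖ ≠ 0 := norm_ne_zero_iff.2 hx
    have hrpow : ContinuousAt (fun x : V ↦ ‖x‖ ^ (α - 2)) x :=
      continuous_norm.continuousAt.rpow_const (.inl hx')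
    exact ((continuousAt_const.mul hrpow).mul hu.contDiff.continuous.continuousAt).smul
      (innerSL ℝ).continuous.continuousAt

lemma BoundedC1.contDiff_norm_rpow_mul (hu : BoundedC1 u) (h0 : u 0 = 0) (hα : 0 < α) :
    ContDiff ℝ 1 fun x ↦ ‖x‖ ^ α * u x := by
  have hderiv := hasFDerivAt_norm_rpow_mul hu.differentiable h0 hα
  refine contDiff_one_iff_fderiv.2 ⟨fun x ↦ (hderiv x).differentiableAt, ?_⟩
  simpa only [funext fun x ↦ (hderiv x).fderiv] using hu.continuous_fderiv_norm_rpow_mul h0 hα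

lemma norm_sq_rpow_neg_mul_norm_fderiv_sq [CompleteSpace V] (hu : Differentiable ℝ u)
    (h0 : u 0 = 0) (hα : 0 < α) {x : V} (hx : x ≠ 0) :
    (‖x‖ ^ 2) ^ (-α) * ‖fderiv ℝ (fun x ↦ ‖x‖ ^ α * u x) x‖ ^ 2 =
      ‖fderiv ℝ u x‖ ^ 2 + 2 * α * (u x * fderiv ℝ u x x / ‖x‖ ^ 2) +
        α ^ 2 * (u x ^ 2 / ‖x‖ ^ 2) := by
  have hx' : 0 < ‖x‖ := norm_pos_iff.2 hx
  rw [(hasFDerivAt_norm_rpow_mul hu h0 hα x).fderiv, norm_smul_add_smul_innerSL_sq,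
    Real.rpow_neg (by positivity), ← Real.rpow_pow_comm (norm_nonneg x), rpow_sub_two hx']
  field_simp

end GroundState

section HardyInequality

variable {V : Type*} [NormedAddCommGroup V] [InnerProductSpace ℝ V] [FiniteDimensional ℝ V]
  [MeasurableSpace V] [BorelSpace V] {f u : V → ℝ}

lemma continuous_integral_mul_exp {g : V → ℝ} (hg : Continuous g) (hsupp : HasCompactSupport g) :
    Continuous fun t : ℝ ↦ ∫ x, g x * Real.exp (-t * ‖x‖ ^ 2) := by
  rw [← continuousOn_univ]
  refine continuousOn_integral_of_compact_support hsupp.isCompact (by fun_prop) fun t x _ hx ↦ ?_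
  rw [image_eq_zero_of_notMem_tsupport hx, zero_mul]

lemma integrable_norm_fderiv_sq (hf : ContDiff ℝ 1 f) (hsupp : HasCompactSupport f) :
    Integrable fun x ↦ ‖fderiv ℝ f x‖ ^ 2 := by
  have hcont : Continuous fun x ↦ ‖fderiv ℝ f x‖ ^ 2 :=
    (hf.continuous_fderiv one_ne_zero).norm.pow 2
  exact hcont.integrable_of_hasCompactSupport
    ((hsupp.fderiv ℝ).norm.comp_left (g := (· ^ 2)) (by simp))

lemma integral_norm_fderiv_sq_pos (hf : ContDiff ℝ 1 f) (hsupp : HasCompactSupport f)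
    (hf0 : f 0 = 0) (hne : ∃ x, f x ≠ 0) : 0 < ∫ x, ‖fderiv ℝ f x‖ ^ 2 := by
  obtain ⟨x, hx⟩ : ∃ x, fderiv ℝ f x ≠ 0 := by
    by_contra! h
    obtain ⟨x, hx⟩ := hne
    exact hx ((is_const_of_fderiv_eq_zero (hf.differentiable one_ne_zero) h x 0).trans hf0)
  have hcont : Continuous fun x ↦ ‖fderiv ℝ f x‖ ^ 2 :=
    (hf.continuous_fderiv one_ne_zero).norm.pow 2
  exact hcont.integral_pos_of_hasCompactSupport_nonneg_nonzero
    ((hsupp.fderiv ℝ).norm.comp_left (g := (· ^ 2)) (by simp)) (fun x ↦ by positivity)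
    (x := x) (by simpa using hx)

lemma eventually_two_mul_integral_sq_mul_exp_lt (hf : ContDiff ℝ 1 f)
    (hsupp : HasCompactSupport f) (hf0 : f 0 = 0) (hne : ∃ x, f x ≠ 0) :
    ∀ᶠ t in 𝓝[>] (0 : ℝ), 2 * t * ∫ x, f x ^ 2 * Real.exp (-t * ‖x‖ ^ 2) <
      ∫ x, ‖fderiv ℝ f x‖ ^ 2 * Real.exp (-t * ‖x‖ ^ 2) := by
  have hleft := continuous_integral_mul_exp (g := fun x ↦ f x ^ 2) (hf.continuous.pow 2)
    (hsupp.comp_left (g := (· ^ 2)) (by simp))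
  have hright := continuous_integral_mul_exp (g := fun x ↦ ‖fderiv ℝ f x‖ ^ 2)
    ((hf.continuous_fderiv one_ne_zero).norm.pow 2)
    ((hsupp.fderiv ℝ).norm.comp_left (g := (· ^ 2)) (by simp))
  refine (((continuous_const.mul continuous_id).mul hleft).continuousAt.eventually_lt
    hright.continuousAt ?_).filter_mono nhdsWithin_le_nhds
  simpa using integral_norm_fderiv_sq_pos hf hsupp hf0 hne

lemma two_mul_integral_rpow_neg_mul_sq_lt [Nontrivial V] (hf : ContDiff ℝ 1 f)
    (hsupp : HasCompactSupport f) (hf0 : f 0 = 0) (hne : ∃ x, f x ≠ 0)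
    (hmean : ∀ t > 0, ∫ x, f x * Real.exp (-t * ‖x‖ ^ 2) = 0) {α : ℝ} (hα : 0 < α)
    (hint : Integrable fun x ↦ (‖x‖ ^ 2) ^ (-(α + 1)) * f x ^ 2)
    (hint' : Integrable fun x ↦ (‖x‖ ^ 2) ^ (-α) * ‖fderiv ℝ f x‖ ^ 2) :
    2 * α * ∫ x, (‖x‖ ^ 2) ^ (-(α + 1)) * f x ^ 2 <
      ∫ x, (‖x‖ ^ 2) ^ (-α) * ‖fderiv ℝ f x‖ ^ 2 := by
  have hpos : ∀ᵐ x : V, 0 < ‖x‖ ^ 2 := by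
    filter_upwards [Measure.ae_ne volume (0 : V)] with x hx
    positivity
  have hfderiv := hf.continuous_fderiv one_ne_zero
  obtain ⟨hintB, hB⟩ := integral_rpow_mul_integral_mul_exp
    (g := fun x ↦ f x ^ 2) (by positivity : 0 < α + 1) (by fun_prop) hpos
    (hf.continuous.pow 2).aestronglyMeasurable hint
  obtain ⟨hintA, hA⟩ := integral_rpow_mul_integral_mul_exp
    (g := fun x ↦ ‖fderiv ℝ f x‖ ^ 2) hα (by fun_prop) hpos
    (hfderiv.norm.pow 2).aestronglyMeasurable hint'
  have hrpow {t : ℝ} (ht : 0 < t) (b : ℝ) : 2 * (t ^ (α + 1 - 1) * b) =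
      t ^ (α - 1) * (2 * t * b) := by
    rw [add_sub_cancel_right, Real.rpow_sub_one ht.ne']
    field_simp
  have hlt := setIntegral_Ioi_lt_of_eventually_lt (hintB.const_mul 2) hintA
    (fun t ht ↦ by
      rw [hrpow ht]
      exact mul_le_mul_of_nonneg_left (two_mul_integral_sq_mul_exp_le
        (.of_hasCompactSupport hf hsupp) ht (hmean t ht)) (Real.rpow_nonneg ht.le _))
    (by
      filter_upwards [eventually_two_mul_integral_sq_mul_exp_lt hf hsupp hf0 hne,
        self_mem_nhdsWithin] with t hlt ht
      rw [hrpow ht]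
      exact mul_lt_mul_of_pos_left hlt (Real.rpow_pos_of_pos ht _))
  rw [integral_const_mul, hA, hB, Real.Gamma_add_one hα.ne'] at hlt
  refine lt_of_mul_lt_mul_left ?_ (Real.Gamma_pos_of_pos hα).le
  linarith

lemma integrable_and_integral_rpow_neg_mul_norm_fderiv_sq [Nontrivial V] (hu : ContDiff ℝ 1 u)
    (hsupp : HasCompactSupport u) (h0 : u 0 = 0) {α : ℝ} (hα : 0 < α) :
    Integrable (fun x ↦ (‖x‖ ^ 2) ^ (-α) * ‖fderiv ℝ (fun x ↦ ‖x‖ ^ α * u x) x‖ ^ 2) ∧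
      ∫ x, (‖x‖ ^ 2) ^ (-α) * ‖fderiv ℝ (fun x ↦ ‖x‖ ^ α * u x) x‖ ^ 2 =
        (∫ x, ‖fderiv ℝ u x‖ ^ 2) +
          α * (α + 2 - Module.finrank ℝ V) * ∫ x, u x ^ 2 / ‖x‖ ^ 2 := by
  have hsq := (integrable_sq_div_norm_sq (μ := volume) hu hsupp h0).const_mul (α ^ 2)
  have hcross :=
    (integrable_mul_fderiv_self_div_norm_sq (μ := volume) hu hsupp h0).const_mul (2 * α)
  have hgrad := integrable_norm_fderiv_sq hu hsupp
  have hsum : Integrable fun x ↦ ‖fderiv ℝ u x‖ ^ 2 + 2 * α * (u x * fderiv ℝ u x x / ‖x‖ ^ 2) :=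
    hgrad.add hcross
  have hexpand : (fun x ↦ (‖x‖ ^ 2) ^ (-α) * ‖fderiv ℝ (fun x ↦ ‖x‖ ^ α * u x) x‖ ^ 2) =ᵐ[volume]
      fun x ↦ ‖fderiv ℝ u x‖ ^ 2 + 2 * α * (u x * fderiv ℝ u x x / ‖x‖ ^ 2) +
        α ^ 2 * (u x ^ 2 / ‖x‖ ^ 2) := by
    filter_upwards [Measure.ae_ne volume (0 : V)] with x hx using
      norm_sq_rpow_neg_mul_norm_fderiv_sq (hu.differentiable one_ne_zero) h0 hα hx
  refine ⟨(hsum.add hsq).congr hexpand.symm, ?_⟩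
  have hscale := two_mul_integral_mul_fderiv_self_div_norm_sq (μ := volume) hu hsupp h0
  rw [integral_congr_ae hexpand, integral_add hsum hsq, integral_add hgrad hcross,
    integral_const_mul, integral_const_mul]
  linear_combination α * hscale

lemma mul_integral_sq_div_norm_sq_lt [Nontrivial V] (hu : ContDiff ℝ 1 u)
    (hsupp : HasCompactSupport u) (h0 : u 0 = 0) (hne : ∃ x, u x ≠ 0)
    (hmean : ∀ φ : ℝ → ℝ, ∫ x, φ ‖x‖ * u x = 0) {α : ℝ} (hα : 0 < α) :
    α * (Module.finrank ℝ V - α) * ∫ x, u x ^ 2 / ‖x‖ ^ 2 < ∫ x, ‖fderiv ℝ u x‖ ^ 2 := by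
  obtain ⟨hint, hgrad⟩ := integrable_and_integral_rpow_neg_mul_norm_fderiv_sq hu hsupp h0 hα
  have hweighted : ∃ x, ‖x‖ ^ α * u x ≠ 0 := by
    obtain ⟨x, hx⟩ := hne
    have hx0 : 0 < ‖x‖ := norm_pos_iff.2 fun h ↦ hx (h ▸ h0)
    exact ⟨x, mul_ne_zero (by positivity) hx⟩
  have hgauss (t : ℝ) : ∫ x, ‖x‖ ^ α * u x * Real.exp (-t * ‖x‖ ^ 2) = 0 := by
    rw [← hmean fun r ↦ r ^ α * Real.exp (-t * r ^ 2)]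
    simp only [mul_right_comm]
  have hlt := two_mul_integral_rpow_neg_mul_sq_lt (f := fun x ↦ ‖x‖ ^ α * u x)
    ((BoundedC1.of_hasCompactSupport hu hsupp).contDiff_norm_rpow_mul h0 hα) hsupp.mul_left
    (by simp only [h0, mul_zero]) hweighted (fun t _ ↦ hgauss t) hα
    (by simpa only [norm_sq_rpow_neg_mul_sq h0] using integrable_sq_div_norm_sq hu hsupp h0) hint
  simp only [norm_sq_rpow_neg_mul_sq h0] at hlt
  rw [hgrad] at hlt
  linear_combination hlt

theorem hardy_lt_of_toSphere_mean_eq_zero (hu : ContDiff ℝ 1 u) (hsupp : HasCompactSupport u)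
    (h0 : u 0 = 0) (hne : ∃ x, u x ≠ 0)
    (hmean : ∀ r : ℝ, 0 < r → ∫ ω : sphere (0 : V) 1, u (r • (ω : V)) ∂volume.toSphere = 0) :
    (Module.finrank ℝ V : ℝ) ^ 2 / 4 * ∫ x, u x ^ 2 / ‖x‖ ^ 2 < ∫ x, ‖fderiv ℝ u x‖ ^ 2 := by
  obtain ⟨x, hx⟩ := hne
  have : Nontrivial V := ⟨x, 0, fun h ↦ hx (h ▸ h0)⟩
  have hdim : (0 : ℝ) < Module.finrank ℝ V / 2 := by
    have := Module.finrank_pos (R := ℝ) (M := V)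
    positivity
  convert! mul_integral_sq_div_norm_sq_lt hu hsupp h0 ⟨x, hx⟩
    (integral_fun_norm_mul_eq_zero volume hmean) hdim using 2
  ring

end HardyInequality

section LogRadial

lemma integral_Ioi_comp_log_div (h : ℝ → ℝ) :
    ∫ r in Set.Ioi (0 : ℝ), h (Real.log r) / r = ∫ s, h s := by
  rw [← Real.range_exp, ← Set.image_univ, integral_image_eq_integral_abs_deriv_smul .univ
    (fun s _ ↦ (Real.hasDerivAt_exp s).hasDerivWithinAt) Real.exp_injective.injOn,
    setIntegral_univ]
  refine integral_congr_ae (ae_of_all _ fun s ↦ ?_)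
  simp only [Real.log_exp, Real.abs_exp, smul_eq_mul]
  field_simp

lemma integral_norm_rpow_neg_finrank_mul_comp_log {E : Type*} [NormedAddCommGroup E]
    [NormedSpace ℝ E] [FiniteDimensional ℝ E] [Nontrivial E] [MeasurableSpace E] [BorelSpace E]
    (μ : Measure E) [μ.IsAddHaarMeasure] (h : ℝ → ℝ) {k : ℝ} (hk : 0 < k) :
    ∫ x, ‖x‖ ^ (-Module.finrank ℝ E : ℝ) * h (k * Real.log ‖x‖) ∂μ =
      Module.finrank ℝ E * μ.real (ball 0 1) / k * ∫ s, h s := by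
  have hradial : ∫ r in Set.Ioi (0 : ℝ), r ^ (Module.finrank ℝ E - 1) •
        (r ^ (-Module.finrank ℝ E : ℝ) * h (k * Real.log r)) =
      ∫ r in Set.Ioi (0 : ℝ), h (k * Real.log r) / r :=
    setIntegral_congr_fun measurableSet_Ioi fun r (hr : 0 < r) ↦ by
      simp only [smul_eq_mul, Real.rpow_neg hr.le, Real.rpow_natCast]
      rw [← pow_sub_one_mul (Module.finrank_pos (R := ℝ) (M := E)).ne' r]
      field_simp
  rw [integral_fun_norm_addHaar μ fun r ↦ r ^ (-Module.finrank ℝ E : ℝ) * h (k * Real.log r),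
    hradial, integral_Ioi_comp_log_div fun s ↦ h (k * s), Measure.integral_comp_mul_left,
    abs_of_pos (by positivity), nsmul_eq_mul, smul_eq_mul, smul_eq_mul]
  ring

/-- The radial profile `r ^ β φ(k log r)`, a function of `log r` times the power `β` of `r`. -/
def logBump (β k : ℝ) (φ : ℝ → ℝ) (r : ℝ) : ℝ := r ^ β * φ (k * Real.log r)

variable {β k : ℝ} {φ : ℝ → ℝ}

lemma eventually_eq_zero_of_le_cocompact (hφ : HasCompactSupport φ) {l : Filter ℝ}
    (hl : l ≤ cocompact ℝ) : ∀ᶠ s in l, φ s = 0 :=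
  hl (coclosedCompact_eq_cocompact (X := ℝ) ▸ hasCompactSupport_iff_eventuallyEq.1 hφ)

lemma logBump_eventually_eq_zero_nhds (hφ : ∀ᶠ s in atBot, φ s = 0) (hβ : β ≠ 0)
    (hk : 0 < k) : ∀ᶠ r in 𝓝 0, logBump β k φ r = 0 := by
  rw [← nhdsNE_sup_pure, eventually_sup, eventually_pure]
  refine ⟨?_, by simp [logBump, Real.zero_rpow hβ]⟩
  filter_upwards [(Real.tendsto_log_nhdsNE_zero.const_mul_atBot hk).eventually hφ] with r hr
  simp [logBump, hr]

lemma logBump_eventually_eq_zero_atTop (hφ : ∀ᶠ s in atTop, φ s = 0) (hk : 0 < k) :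
    ∀ᶠ r in atTop, logBump β k φ r = 0 := by
  filter_upwards [(Real.tendsto_log_atTop.const_mul_atTop hk).eventually hφ] with r hr
  simp [logBump, hr]

lemma contDiff_logBump (hφ : ContDiff ℝ (⊤ : ℕ∞) φ) (hbot : ∀ᶠ s in atBot, φ s = 0)
    (hβ : β ≠ 0) (hk : 0 < k) : ContDiff ℝ (⊤ : ℕ∞) (logBump β k φ) := by
  refine contDiff_iff_contDiffAt.2 fun r ↦ ?_
  rcases eq_or_ne r 0 with rfl | hr
  · exact contDiffAt_const.congr_of_eventuallyEq (logBump_eventually_eq_zero_nhds hbot hβ hk)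
  · exact (Real.contDiffAt_rpow_const_of_ne hr).mul
      (hφ.contDiffAt.comp r (contDiffAt_const.mul (Real.contDiffAt_log.2 hr)))

lemma hasDerivAt_logBump (hφ : Differentiable ℝ φ) {r : ℝ} (hr : 0 < r) :
    HasDerivAt (logBump β k φ)
      (r ^ β * (β * φ (k * Real.log r) + k * deriv φ (k * Real.log r)) / r) r := by
  have hlog := (hφ _).hasDerivAt.comp r ((Real.hasDerivAt_log hr.ne').const_mul k)
  convert! (Real.hasDerivAt_rpow_const (p := β) (.inl hr.ne')).mul hlog using 1
  rw [Real.rpow_sub_one hr.ne']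
  simp only [Function.comp_apply]
  field_simp

lemma logBump_neg_half_sq (n k : ℝ) (φ : ℝ → ℝ) {r : ℝ} (hr : 0 < r) :
    logBump (-n / 2) k φ r ^ 2 = r ^ (-n) * φ (k * Real.log r) ^ 2 := by
  rw [logBump, mul_pow, ← Real.rpow_mul_natCast hr.le]
  norm_num

lemma logBump_neg_half_energy (hφ : Differentiable ℝ φ) (n : ℝ) {r : ℝ} (hr : 0 < r) :
    n * logBump (-n / 2) k φ r ^ 2 +
        2 * logBump (-n / 2) k φ r * (r * deriv (logBump (-n / 2) k φ) r) +
        (r * deriv (logBump (-n / 2) k φ) r) ^ 2 =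
      r ^ (-n) * (n ^ 2 / 4 * φ (k * Real.log r) ^ 2 +
        (2 - n) * k * (φ (k * Real.log r) * deriv φ (k * Real.log r)) +
        k ^ 2 * deriv φ (k * Real.log r) ^ 2) := by
  have hpow : r ^ (-n) = (r ^ (-n / 2)) ^ 2 := by
    rw [← Real.rpow_mul_natCast hr.le]
    norm_num
  rw [(hasDerivAt_logBump hφ hr).deriv, mul_div_cancel₀ _ hr.ne', hpow, logBump]
  ring

lemma integral_sq_add_mul_deriv_add_deriv_sq (hφ : ContDiff ℝ 1 φ) (hsupp : HasCompactSupport φ)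
    (a b c : ℝ) :
    ∫ s, (a * φ s ^ 2 + b * (φ s * deriv φ s) + c * deriv φ s ^ 2) =
      a * (∫ s, φ s ^ 2) + c * ∫ s, deriv φ s ^ 2 := by
  have hcont := hφ.continuous
  have hcont' : Continuous (deriv φ) := hφ.continuous_deriv le_rfl
  have hsq : Integrable fun s ↦ φ s ^ 2 :=
    (by fun_prop : Continuous fun s ↦ φ s ^ 2).integrable_of_hasCompactSupport
      (hsupp.comp_left (g := (· ^ 2)) (by simp))
  have hmul : Integrable fun s ↦ φ s * deriv φ s :=
    (hcont.mul hcont').integrable_of_hasCompactSupport hsupp.mul_right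
  have hsq' : Integrable fun s ↦ deriv φ s ^ 2 :=
    (by fun_prop : Continuous fun s ↦ deriv φ s ^ 2).integrable_of_hasCompactSupport
      (hsupp.deriv.comp_left (g := (· ^ 2)) (by simp))
  have hderiv (s : ℝ) : HasDerivAt (fun s ↦ φ s ^ 2 / 2) (φ s * deriv φ s) s := by
    convert! ((hφ.differentiable one_ne_zero s).hasDerivAt.pow 2).div_const 2 using 1
    ring
  have hzero : ∫ s, φ s * deriv φ s = 0 :=
    integral_eq_zero_of_hasDerivAt_of_integrable hderiv hmul (hsq.div_const 2)
  have hsum : Integrable fun s ↦ a * φ s ^ 2 + b * (φ s * deriv φ s) :=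
    (hsq.const_mul a).add (hmul.const_mul b)
  rw [integral_add hsum (hsq'.const_mul c), integral_add (hsq.const_mul a) (hmul.const_mul b),
    integral_const_mul, integral_const_mul, integral_const_mul, hzero, mul_zero, add_zero]

end LogRadial

section RadialProfile

variable {V : Type*} [NormedAddCommGroup V] [InnerProductSpace ℝ V] {ρ : ℝ → ℝ}

lemma contDiff_comp_norm (hρ : ContDiff ℝ (⊤ : ℕ∞) ρ) (h0 : ∀ᶠ r in 𝓝 0, ρ r = 0) :
    ContDiff ℝ (⊤ : ℕ∞) fun x : V ↦ ρ ‖x‖ := by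
  refine contDiff_iff_contDiffAt.2 fun x ↦ ?_
  rcases eq_or_ne x 0 with rfl | hx
  · exact contDiffAt_const.congr_of_eventuallyEq
      ((continuous_norm.tendsto' 0 0 norm_zero).eventually h0)
  · exact hρ.contDiffAt.comp x (contDiffAt_norm ℝ hx)

lemma hasCompactSupport_comp_norm {E : Type*} [NormedAddCommGroup E] [ProperSpace E]
    (htop : ∀ᶠ r in atTop, ρ r = 0) : HasCompactSupport fun x : E ↦ ρ ‖x‖ :=
  hasCompactSupport_iff_eventuallyEq.2 <| by
    rw [coclosedCompact_eq_cocompact]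
    exact (tendsto_norm_cocompact_atTop (E := E)).eventually htop

lemma fderiv_inner_mul_comp_norm {x : V} (hρ : DifferentiableAt ℝ ρ ‖x‖) (hx : x ≠ 0) (v : V) :
    fderiv ℝ (fun x ↦ inner ℝ v x * ρ ‖x‖) x =
      ρ ‖x‖ • innerSL ℝ v + (inner ℝ v x * deriv ρ ‖x‖ / ‖x‖) • innerSL ℝ x := by
  have hnorm : HasFDerivAt (fun x : V ↦ ‖x‖) (‖x‖⁻¹ • innerSL ℝ x) x := by
    convert! hasFDerivAt_norm_rpow_of_ne_zero hx 1 using 2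
    · simp
    · norm_num [Real.rpow_neg_one]
  have hinner : HasFDerivAt (fun x ↦ inner ℝ v x) (innerSL ℝ v) x := (innerSL ℝ v).hasFDerivAt
  convert! (hinner.mul (hρ.hasDerivAt.comp_hasFDerivAt x hnorm)).fderiv using 1
  rw [add_comm, smul_smul, smul_smul, div_eq_mul_inv, mul_assoc]
  rfl

variable {ι : Type*} [Fintype ι] (b : OrthonormalBasis ι ℝ V)

lemma sum_inner_mul_sq_div_norm_sq {x : V} (hx : x ≠ 0) (a : ℝ) :
    ∑ i, (inner ℝ (b i) x * a) ^ 2 / ‖x‖ ^ 2 = a ^ 2 := by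
  have hsum := b.sum_sq_norm_inner_right x
  simp only [Real.norm_eq_abs, sq_abs] at hsum
  simp only [mul_pow]
  rw [← Finset.sum_div, ← Finset.sum_mul, hsum]
  field_simp

lemma sum_norm_fderiv_inner_mul_comp_norm_sq [CompleteSpace V] {x : V}
    (hρ : DifferentiableAt ℝ ρ ‖x‖) (hx : x ≠ 0) :
    ∑ i, ‖fderiv ℝ (fun x ↦ inner ℝ (b i) x * ρ ‖x‖) x‖ ^ 2 =
      Fintype.card ι * ρ ‖x‖ ^ 2 + 2 * ρ ‖x‖ * (‖x‖ * deriv ρ ‖x‖) + (‖x‖ * deriv ρ ‖x‖) ^ 2 := by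
  have hterm (i : ι) : ‖fderiv ℝ (fun x ↦ inner ℝ (b i) x * ρ ‖x‖) x‖ ^ 2 =
      ρ ‖x‖ ^ 2 + (2 * ρ ‖x‖ * deriv ρ ‖x‖ / ‖x‖ + deriv ρ ‖x‖ ^ 2) * ‖inner ℝ (b i) x‖ ^ 2 := by
    rw [fderiv_inner_mul_comp_norm hρ hx, norm_smul_add_smul_innerSL_sq, innerSL_apply_norm,
      innerSL_apply_apply, b.orthonormal.1 i, Real.norm_eq_abs, sq_abs]
    field_simp
    ring
  rw [Finset.sum_congr rfl fun i _ ↦ hterm i, Finset.sum_add_distrib, ← Finset.mul_sum,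
    b.sum_sq_norm_inner_right, Finset.sum_const, Finset.card_univ, nsmul_eq_mul]
  field_simp
  ring

end RadialProfile

section Optimality

variable {V : Type*} [NormedAddCommGroup V] [InnerProductSpace ℝ V] {φ : ℝ → ℝ} {k : ℝ}

/-- The functions `⟪v, x⟫ ‖x‖ ^ (-N/2) φ(k log ‖x‖)` on a space of dimension `N`, which
approach the optimal Hardy constant, on average over an orthonormal basis of `v`s, as `k → 0`. -/
def hardyTest (φ : ℝ → ℝ) (k : ℝ) (v x : V) : ℝ :=
  inner ℝ v x * logBump (-Module.finrank ℝ V / 2) k φ ‖x‖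

lemma hardyTest_neg (φ : ℝ → ℝ) (k : ℝ) (v x : V) :
    hardyTest φ k v (-x) = -hardyTest φ k v x := by
  rw [hardyTest, hardyTest, norm_neg, inner_neg_right, neg_mul]

lemma hardyTest_zero (φ : ℝ → ℝ) (k : ℝ) (v : V) : hardyTest φ k v 0 = 0 := by
  rw [hardyTest, inner_zero_right, zero_mul]

variable [FiniteDimensional ℝ V]

lemma hasCompactSupport_hardyTest (hφ : HasCompactSupport φ) (hk : 0 < k) (v : V) :
    HasCompactSupport (hardyTest φ k v) :=
  (hasCompactSupport_comp_norm (logBump_eventually_eq_zero_atTop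
    (eventually_eq_zero_of_le_cocompact hφ atTop_le_cocompact) hk)).mul_left

variable [Nontrivial V]

lemma contDiff_hardyTest (hφ : ContDiff ℝ (⊤ : ℕ∞) φ) (hsupp : HasCompactSupport φ) (hk : 0 < k)
    (v : V) : ContDiff ℝ (⊤ : ℕ∞) (hardyTest φ k v) := by
  have hbot := eventually_eq_zero_of_le_cocompact hsupp atBot_le_cocompact
  have hβ : -(Module.finrank ℝ V : ℝ) / 2 ≠ 0 := by
    have := Module.finrank_pos (R := ℝ) (M := V)
    simp [this.ne']
  exact (innerSL ℝ v).contDiff.mul (contDiff_comp_norm (contDiff_logBump hφ hbot hβ hk)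
    (logBump_eventually_eq_zero_nhds hbot hβ hk))

variable [MeasurableSpace V] [BorelSpace V] {ι : Type*} [Fintype ι] (b : OrthonormalBasis ι ℝ V)

lemma sum_integral_hardyTest_sq_div_norm_sq (hφ : ContDiff ℝ (⊤ : ℕ∞) φ)
    (hsupp : HasCompactSupport φ) (hk : 0 < k) :
    ∑ i, ∫ x, hardyTest φ k (b i) x ^ 2 / ‖x‖ ^ 2 =
      Module.finrank ℝ V * volume.real (ball (0 : V) 1) / k * ∫ s, φ s ^ 2 := by
  have hint (i : ι) : Integrable fun x ↦ hardyTest φ k (b i) x ^ 2 / ‖x‖ ^ 2 :=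
    integrable_sq_div_norm_sq ((contDiff_hardyTest hφ hsupp hk (b i)).of_le (mod_cast le_top))
      (hasCompactSupport_hardyTest hsupp hk (b i)) (hardyTest_zero φ k (b i))
  rw [← integral_finsetSum _ fun i _ ↦ hint i,
    ← integral_norm_rpow_neg_finrank_mul_comp_log volume (fun s ↦ φ s ^ 2) hk]
  refine integral_congr_ae ?_
  filter_upwards [Measure.ae_ne volume (0 : V)] with x hx
  simp only [hardyTest]
  rw [sum_inner_mul_sq_div_norm_sq b hx, logBump_neg_half_sq _ _ _ (norm_pos_iff.2 hx)]

lemma sum_integral_norm_fderiv_hardyTest_sq (hφ : ContDiff ℝ (⊤ : ℕ∞) φ)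
    (hsupp : HasCompactSupport φ) (hk : 0 < k) :
    ∑ i, ∫ x, ‖fderiv ℝ (hardyTest φ k (b i)) x‖ ^ 2 =
      Module.finrank ℝ V * volume.real (ball (0 : V) 1) / k *
        ((Module.finrank ℝ V : ℝ) ^ 2 / 4 * (∫ s, φ s ^ 2) + k ^ 2 * ∫ s, deriv φ s ^ 2) := by
  have hφ' : ContDiff ℝ 1 φ := hφ.of_le (mod_cast le_top)
  have hdiff : Differentiable ℝ φ := hφ'.differentiable one_ne_zero
  have hint (i : ι) : Integrable fun x ↦ ‖fderiv ℝ (hardyTest φ k (b i)) x‖ ^ 2 :=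
    integrable_norm_fderiv_sq ((contDiff_hardyTest hφ hsupp hk (b i)).of_le (mod_cast le_top))
      (hasCompactSupport_hardyTest hsupp hk (b i))
  rw [← integral_finsetSum _ fun i _ ↦ hint i,
    ← integral_sq_add_mul_deriv_add_deriv_sq hφ' hsupp _ ((2 - Module.finrank ℝ V) * k),
    ← integral_norm_rpow_neg_finrank_mul_comp_log volume _ hk]
  refine integral_congr_ae ?_
  filter_upwards [Measure.ae_ne volume (0 : V)] with x hx
  have hx' : 0 < ‖x‖ := norm_pos_iff.2 hx
  have henergy := sum_norm_fderiv_inner_mul_comp_norm_sq b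
    (hasDerivAt_logBump (β := -Module.finrank ℝ V / 2) (k := k) hdiff hx').differentiableAt hx
  rw [← Module.finrank_eq_card_basis b.toBasis, logBump_neg_half_energy hdiff _ hx'] at henergy
  exact henergy

theorem exists_odd_integral_norm_fderiv_sq_lt {ε : ℝ} (hε : 0 < ε) :
    ∃ u : V → ℝ, ContDiff ℝ (⊤ : ℕ∞) u ∧ HasCompactSupport u ∧ (∀ x, u (-x) = -u x) ∧
      ∫ x, ‖fderiv ℝ u x‖ ^ 2 <
        ((Module.finrank ℝ V : ℝ) ^ 2 / 4 + ε) * ∫ x, u x ^ 2 / ‖x‖ ^ 2 := by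
  let φ : ContDiffBump (0 : ℝ) := ⟨1, 2, one_pos, one_lt_two⟩
  have hφ : ContDiff ℝ (⊤ : ℕ∞) φ := φ.contDiff
  have hpos : 0 < ∫ s, φ s ^ 2 :=
    (φ.continuous.pow 2).integral_pos_of_hasCompactSupport_nonneg_nonzero
      (φ.hasCompactSupport.comp_left (g := (· ^ 2)) (by simp)) (fun s ↦ sq_nonneg _)
      (x := 0) (by simp [φ.one_of_mem_closedBall (mem_closedBall_self φ.rIn_pos.le)])
  obtain ⟨c, hc, hlt⟩ := exists_pos_mul_lt (mul_pos hε hpos) (∫ s, deriv φ s ^ 2)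
  have hk : 0 < √c := Real.sqrt_pos.2 hc
  let b := stdOrthonormalBasis ℝ V
  have hball : 0 < volume.real (ball (0 : V) 1) :=
    ENNReal.toReal_pos (measure_ball_pos _ _ one_pos).ne' measure_ball_lt_top.ne
  have hdim : 0 < Module.finrank ℝ V := Module.finrank_pos
  obtain ⟨i, -, hi⟩ : ∃ i ∈ Finset.univ, ∫ x, ‖fderiv ℝ (hardyTest φ √c (b i)) x‖ ^ 2 <
      ((Module.finrank ℝ V : ℝ) ^ 2 / 4 + ε) *
        ∫ x, hardyTest φ √c (b i) x ^ 2 / ‖x‖ ^ 2 := by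
    refine Finset.exists_lt_of_sum_lt ?_
    rw [← Finset.mul_sum, sum_integral_norm_fderiv_hardyTest_sq b hφ φ.hasCompactSupport hk,
      sum_integral_hardyTest_sq_div_norm_sq b hφ φ.hasCompactSupport hk, Real.sq_sqrt hc.le,
      mul_left_comm]
    gcongr
    linarith
  exact ⟨hardyTest φ √c (b i), contDiff_hardyTest hφ φ.hasCompactSupport hk (b i),
    hasCompactSupport_hardyTest φ.hasCompactSupport hk (b i), hardyTest_neg φ √c (b i), hi⟩

end Optimality

end Hardy

theorem hardy_sphere_avg_zero_whole_space_general (N : ℕ) (hN : 1 ≤ N) :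
    (∀ u : EuclideanSpace ℝ (Fin N) → ℝ,
      ContDiff ℝ 1 u → HasCompactSupport u → SphereAvgZero u →
      ((N : ℝ) ^ 2 / 4) * (∫ x, (u x) ^ 2 / ‖x‖ ^ 2) ≤ ∫ x, ‖fderiv ℝ u x‖ ^ 2) ∧
    (∀ ε : ℝ, 0 < ε →
      ∃ u : EuclideanSpace ℝ (Fin N) → ℝ,
        ContDiff ℝ (⊤ : ℕ∞) u ∧ HasCompactSupport u ∧ SphereAvgZero u ∧
        (∃ x, u x ≠ 0) ∧
        (∫ x, ‖fderiv ℝ u x‖ ^ 2) <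
          ((N : ℝ) ^ 2 / 4 + ε) * (∫ x, (u x) ^ 2 / ‖x‖ ^ 2)) ∧
    (∀ u : EuclideanSpace ℝ (Fin N) → ℝ,
      ContDiff ℝ 1 u → HasCompactSupport u → SphereAvgZero u → (∃ x, u x ≠ 0) →
      ((N : ℝ) ^ 2 / 4) * (∫ x, (u x) ^ 2 / ‖x‖ ^ 2) < ∫ x, ‖fderiv ℝ u x‖ ^ 2) := by
  have : NeZero N := ⟨by omega⟩
  have hstrict (u : EuclideanSpace ℝ (Fin N) → ℝ) (hu : ContDiff ℝ 1 u)
      (hsupp : HasCompactSupport u) (havg : SphereAvgZero u) (hne : ∃ x, u x ≠ 0) :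
      ((N : ℝ) ^ 2 / 4) * (∫ x, (u x) ^ 2 / ‖x‖ ^ 2) < ∫ x, ‖fderiv ℝ u x‖ ^ 2 := by
    simpa only [finrank_euclideanSpace_fin] using hardy_lt_of_toSphere_mean_eq_zero hu hsupp
      havg.apply_zero hne fun r hr ↦ havg r hr.le
  refine ⟨fun u hu hsupp havg ↦ ?_, fun ε hε ↦ ?_, hstrict⟩
  · by_cases hne : ∃ x, u x ≠ 0
    · exact (hstrict u hu hsupp havg hne).le
    · obtain rfl : u = 0 := funext (by simpa using hne)
      simp
  · obtain ⟨u, hu, hsupp, hodd, hlt⟩ :=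
      exists_odd_integral_norm_fderiv_sq_lt (V := EuclideanSpace ℝ (Fin N)) hε
    rw [finrank_euclideanSpace_fin] at hlt
    refine ⟨u, hu, hsupp, .of_odd hodd, ?_, hlt⟩
    by_contra! h
    obtain rfl : u = 0 := funext h
    simp at hlt

/-- Let `N ≥ 2`. For every `u ∈ C₀^∞(ℝᴺ)` with spherical
average zero, `(N²/4) ∫ |u|²/|x|² ≤ ∫ |∇u|²`. Moreover `N²/4` is optimal: for
every `ε > 0` some admissible nonzero `u` has Rayleigh quotient below
`N²/4 + ε`; and the best constant is not attained, i.e. the inequality is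
strict for every admissible nonzero `u`. -/
theorem hardy_sphere_avg_zero_whole_space (N : ℕ) (hN : 2 ≤ N) :
    (∀ u : EuclideanSpace ℝ (Fin N) → ℝ,
      ContDiff ℝ (⊤ : ℕ∞) u → HasCompactSupport u → SphereAvgZero u →
      ((N : ℝ) ^ 2 / 4) * (∫ x, (u x) ^ 2 / ‖x‖ ^ 2) ≤ ∫ x, ‖fderiv ℝ u x‖ ^ 2) ∧
    (∀ ε : ℝ, 0 < ε →
      ∃ u : EuclideanSpace ℝ (Fin N) → ℝ,
        ContDiff ℝ (⊤ : ℕ∞) u ∧ HasCompactSupport u ∧ SphereAvgZero u ∧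
        (∃ x, u x ≠ 0) ∧
        (∫ x, ‖fderiv ℝ u x‖ ^ 2) <
          ((N : ℝ) ^ 2 / 4 + ε) * (∫ x, (u x) ^ 2 / ‖x‖ ^ 2)) ∧
    (∀ u : EuclideanSpace ℝ (Fin N) → ℝ,
      ContDiff ℝ (⊤ : ℕ∞) u → HasCompactSupport u → SphereAvgZero u → (∃ x, u x ≠ 0) →
      ((N : ℝ) ^ 2 / 4) * (∫ x, (u x) ^ 2 / ‖x‖ ^ 2) < ∫ x, ‖fderiv ℝ u x‖ ^ 2) := by
  obtain ⟨hle, hopt, hlt⟩ := hardy_sphere_avg_zero_whole_space_general N (by omega)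
  exact ⟨fun u hu ↦ hle u (hu.of_le (mod_cast le_top)), hopt,
    fun u hu ↦ hlt u (hu.of_le (mod_cast le_top))⟩

end
end
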